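/- Let β ∈ (1,2) with δ(β) = (1^m 0)^∞ for some m ≥ 1, and let [t_L, t_R) ⊂ [0, 1 − 1/β) be a β-Lyndon interval. Then for every t' ∈ (t_R, 1), dim_H K_β(t') < dim_H K_β(t_R). -/

import Mathlib

open Set Filter MeasureTheory

/-- The β-transformation `x ↦ βx (mod 1)`. -/
noncomputable def Tbeta (β x : ℝ) : ℝ := Int.fract (β * x)

/-- The survivor set `K_β(t) = {x ∈ [0,1) : T_β^n x ≥ t for all n ≥ 0}`. -/
def Kset (β t : ℝ) : Set ℝ := {x | x ∈ Set.Ico (0 : ℝ) 1 ∧ ∀ n : ℕ, t ≤ (Tbeta β)^[n] x}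

/-- Strict lexicographic order on sequences of naturals. -/
def seqLt (x y : ℕ → ℕ) : Prop := ∃ n, (∀ i, i < n → x i = y i) ∧ x n < y n

/-- Lexicographic order on sequences of naturals. -/
def seqLe (x y : ℕ → ℕ) : Prop := x = y ∨ seqLt x y

/-- The `n`-th iterate of the left shift. -/
def shiftN (n : ℕ) (x : ℕ → ℕ) : ℕ → ℕ := fun i => x (i + n)

/-- The sequence `w 0^∞`. -/
def wordSeq (w : List ℕ) : ℕ → ℕ := fun i => w.getD i 0

/-- The periodic sequence `w^∞`. -/
def perSeq (w : List ℕ) : ℕ → ℕ := fun i => w.getD (i % w.length) 0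

/-- The sequence obtained by concatenating the word `w` with the sequence `x`. -/
def catSeq (w : List ℕ) (x : ℕ → ℕ) : ℕ → ℕ :=
  fun i => if i < w.length then w.getD i 0 else x (i - w.length)

/-- The greedy β-expansion of `t`: the digit `b_{i+1}` is `⌊β T_β^i t⌋`. -/
noncomputable def greedy (β t : ℝ) : ℕ → ℕ := fun i => (⌊β * (Tbeta β)^[i] t⌋).toNat

/-- `d` is the quasi-greedy β-expansion of `1`: the lexicographically largest
sequence in `{0,1}^ℕ` not ending in `0^∞` whose digits sum to `1` in base `β`. -/
def IsQuasiGreedy (β : ℝ) (d : ℕ → ℕ) : Prop :=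
  (∀ i, d i ≤ 1) ∧ (¬ ∃ N, ∀ n, N ≤ n → d n = 0) ∧
  (∑' i : ℕ, (d i : ℝ) / β ^ (i + 1) = 1) ∧
  ∀ e : ℕ → ℕ, (∀ i, e i ≤ 1) → (¬ ∃ N, ∀ n, N ≤ n → e n = 0) →
    (∑' i : ℕ, (e i : ℝ) / β ^ (i + 1) = 1) → seqLe e d

/-- `s = s_1…s_p` is a β-Lyndon word: `s_{i+1}…s_p ≻ s_1…s_{p-i}` for `1 ≤ i < p`
and `σ^n(s^∞) ≺ δ(β)` for all `n ≥ 0`. -/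
def IsBetaLyndon (β : ℝ) (s : List ℕ) : Prop :=
  s ≠ [] ∧ (∀ a ∈ s, a ≤ 1) ∧
  (∀ i, 1 ≤ i → i < s.length →
    seqLt (wordSeq (s.take (s.length - i))) (wordSeq (s.drop i))) ∧
  (∀ d : ℕ → ℕ, IsQuasiGreedy β d → ∀ n : ℕ, seqLt (shiftN n (perSeq s)) d)

/-- Left endpoint `t_L = Σ_{i=1}^p s_i β^{-i}` of the β-Lyndon interval generated by `s`. -/
noncomputable def lyndonLeft (β : ℝ) (s : List ℕ) : ℝ :=
  ∑ i ∈ Finset.range s.length, (s.getD i 0 : ℝ) / β ^ (i + 1)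

/-- Right endpoint `t_R = (β^p/(β^p - 1)) t_L` of the β-Lyndon interval generated by `s`. -/
noncomputable def lyndonRight (β : ℝ) (s : List ℕ) : ℝ :=
  β ^ s.length / (β ^ s.length - 1) * lyndonLeft β s

/-- The union of all β-Lyndon intervals `[t_L, t_R)`. -/
noncomputable def lyndonUnionIco (β : ℝ) : Set ℝ :=
  ⋃ s ∈ {s : List ℕ | IsBetaLyndon β s}, Set.Ico (lyndonLeft β s) (lyndonRight β s)

/-- The symbolic survivor set `K̃_β(t)` with upper bound sequence `d = δ(β)`. -/
def Ktilde (β t : ℝ) (d : ℕ → ℕ) : Set (ℕ → ℕ) :=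
  {x | (∀ i, x i ≤ 1) ∧ ∀ n : ℕ, seqLe (greedy β t) (shiftN n x) ∧ seqLe (shiftN n x) d}

/-- The set-valued bifurcation set `E_β`. -/
def Eset (β : ℝ) : Set ℝ :=
  {t | t ∈ Set.Ico (0 : ℝ) 1 ∧ ∀ t', t < t' → t' < 1 → Kset β t' ≠ Kset β t}

/-- The dimension bifurcation set `B_β`. -/
def Bset (β : ℝ) : Set ℝ :=
  {t | t ∈ Set.Ico (0 : ℝ) 1 ∧ ∀ t', t < t' → t' < 1 → dimH (Kset β t') ≠ dimH (Kset β t)}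

/-- `β` is a multinacci number: `β^{m+1} = β^m + ⋯ + β + 1` for some `m ≥ 1`. -/
def IsMultinacci (β : ℝ) : Prop :=
  ∃ m : ℕ, 1 ≤ m ∧ β ^ (m + 1) = ∑ i ∈ Finset.range (m + 1), β ^ i


/-- digit as a real -/
noncomputable def bd (b : Bool) : ℝ := if b then 1 else 0

/-- value of a 0/1 sequence -/
noncomputable def pv (β : ℝ) (z : ℕ → Bool) : ℝ := ∑' i, bd (z i) / β ^ (i + 1)

lemma bd_nonneg (b : Bool) : 0 ≤ bd b := by cases b <;> simp [bd]
lemma bd_le_one (b : Bool) : bd b ≤ 1 := by cases b <;> simp [bd]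
lemma bd_true : bd true = 1 := by simp [bd]
lemma bd_false : bd false = 0 := by simp [bd]

lemma geo_summable {β : ℝ} (hβ : 1 < β) : Summable (fun i : ℕ => 1 / β ^ (i + 1)) := by
  have h := (summable_geometric_of_lt_one (r := β⁻¹) (by positivity) (inv_lt_one_of_one_lt₀ hβ))
  have h2 := h.mul_left (β⁻¹)
  refine h2.congr (fun i => ?_)
  rw [pow_succ']
  have : β ≠ 0 := by positivity
  rw [inv_pow, one_div, mul_inv]

lemma pv_summable {β : ℝ} (hβ : 1 < β) (z : ℕ → Bool) :
    Summable (fun i => bd (z i) / β ^ (i + 1)) := by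
  have h0 : 0 < β := by linarith
  refine Summable.of_nonneg_of_le (fun i => ?_) (fun i => ?_) (geo_summable hβ)
  · have := bd_nonneg (z i); positivity
  · have := bd_le_one (z i); gcongr

lemma pv_nonneg {β : ℝ} (hβ : 1 < β) (z : ℕ → Bool) : 0 ≤ pv β z := by
  have h0 : 0 < β := by linarith
  refine tsum_nonneg (fun i => ?_)
  have := bd_nonneg (z i); positivity

lemma pv_le_geo {β : ℝ} (hβ : 1 < β) (z : ℕ → Bool) : pv β z ≤ ∑' i : ℕ, 1 / β ^ (i + 1) := by
  have h0 : 0 < β := by linarith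
  refine (pv_summable hβ z).tsum_le_tsum (fun i => ?_) (geo_summable hβ)
  have := bd_le_one (z i); gcongr

lemma pv_split {β : ℝ} (hβ : 1 < β) (z : ℕ → Bool) (q : ℕ) :
    pv β z = ∑ i ∈ Finset.range q, bd (z i) / β ^ (i + 1) + pv β (fun i => z (i + q)) / β ^ q := by
  have h0 : 0 < β := by linarith
  unfold pv
  rw [← (pv_summable hβ z).sum_add_tsum_nat_add q, ← tsum_div_const]
  congr 1
  refine tsum_congr (fun i => ?_)
  rw [div_div, ← pow_add]
  congr 2
  ring

def NoRun (m : ℕ) (z : ℕ → Bool) : Prop := ∀ i, ∃ j ≤ m, z (i + j) = false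

lemma NoRun.shift {m : ℕ} {z : ℕ → Bool} (h : NoRun m z) (q : ℕ) : NoRun m (fun i => z (i + q)) := by
  intro i
  obtain ⟨j, hj, h1⟩ := h (i + q)
  exact ⟨j, hj, by rw [← h1]; ring_nf⟩

/-- first zero -/
lemma NoRun.first {m : ℕ} {z : ℕ → Bool} (h : NoRun m z) :
    ∃ j ≤ m, (∀ l < j, z l = true) ∧ z j = false := by
  obtain ⟨j0, hj0, h0⟩ := h 0
  have hex : ∃ j, z j = false := ⟨j0, by simpa using h0⟩
  refine ⟨Nat.find hex, ?_, ?_, Nat.find_spec hex⟩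
  · exact (Nat.find_min' hex (by simpa using h0)).trans hj0
  · intro l hl
    have := Nat.find_min hex hl
    simpa using this

lemma pv_le_one {β : ℝ} (hβ : 1 < β) {m : ℕ}
    (hm : ∑ i ∈ Finset.range (m + 1), 1 / β ^ (i + 1) = 1) {z : ℕ → Bool} (hz : NoRun m z) :
    pv β z ≤ 1 := by
  have h0 : 0 < β := by linarith
  set C := ∑' i : ℕ, 1 / β ^ (i + 1) with hC
  have hC0 : 0 ≤ C := tsum_nonneg (fun i => by positivity)
  have key : ∀ n : ℕ, ∀ z : ℕ → Bool, NoRun m z → pv β z ≤ 1 + C / β ^ n := by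
    intro n
    induction n with
    | zero => intro z _; have := pv_le_geo hβ z; simp; linarith
    | succ n ih =>
      intro z hz
      obtain ⟨j, hj, h1, h2⟩ := hz.first
      rw [pv_split hβ z (j + 1), Finset.sum_range_succ, h2, bd_false]
      have e1 : ∑ x ∈ Finset.range j, bd (z x) / β ^ (x + 1) = ∑ x ∈ Finset.range j, 1 / β ^ (x + 1) := by
        refine Finset.sum_congr rfl (fun x hx => ?_)
        rw [h1 x (Finset.mem_range.mp hx), bd_true]
      have e2 : ∑ x ∈ Finset.range (j+1), 1 / β ^ (x + 1) ≤ ∑ x ∈ Finset.range (m+1), 1 / β ^ (x + 1) := by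
        refine Finset.sum_le_sum_of_subset_of_nonneg (by simpa using hj) (fun i _ _ => by positivity)
      rw [Finset.sum_range_succ] at e2
      have e3 := ih _ (hz.shift (j + 1))
      have e4 : pv β (fun i => z (i + (j+1))) / β ^ (j+1) ≤ (1 + C / β ^ n) / β ^ (j+1) := by gcongr
      have e5 : C / β ^ n / β ^ (j + 1) ≤ C / β ^ (n+1) := by
        rw [div_div, ← pow_add]
        gcongr
        · exact hβ.le
        · omega
      rw [add_div] at e4
      rw [e1, zero_div]
      linarith
  have hlim : Tendsto (fun n : ℕ => 1 + C / β ^ n) atTop (nhds (1 + 0)) := by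
    refine tendsto_const_nhds.add ?_
    exact tendsto_const_nhds.div_atTop (tendsto_pow_atTop_atTop_of_one_lt hβ)
  rw [add_zero] at hlim
  exact ge_of_tendsto' hlim (fun n => key n z hz)

/-- lexicographic monotonicity -/
lemma pv_lt_of_lex {β : ℝ} (hβ : 1 < β) {y z : ℕ → Bool} {k : ℕ} {c : ℝ}
    (h : ∀ l < k, y l = z l) (hy : y k = false) (hz : z k = true)
    (hc : pv β (fun i => y (i + (k + 1))) ≤ c) :
    pv β z - pv β y ≥ (1 - c) / β ^ (k + 1) := by
  have h0 : 0 < β := by linarith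
  rw [pv_split hβ z (k+1), pv_split hβ y (k+1), Finset.sum_range_succ, Finset.sum_range_succ, hy, hz,
    bd_true, bd_false]
  have e1 : ∑ x ∈ Finset.range k, bd (y x) / β ^ (x + 1) = ∑ x ∈ Finset.range k, bd (z x) / β ^ (x + 1) := by
    refine Finset.sum_congr rfl (fun x hx => ?_)
    rw [h x (Finset.mem_range.mp hx)]
  rw [e1]
  have e2 : pv β (fun i => y (i + (k+1))) / β ^ (k+1) ≤ c / β ^ (k+1) := by gcongr
  have e3 : 0 ≤ pv β (fun i => z (i + (k+1))) / β ^ (k+1) := by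
    have := pv_nonneg hβ (fun i => z (i + (k+1))); positivity
  rw [sub_div]
  linarith [e2, e3, zero_div (β ^ (k+1))]

/-- gap lemma -/
lemma pv_gap {β : ℝ} (hβ : 1 < β) (hβ2 : β < 2) {m : ℕ}
    (hm : ∑ i ∈ Finset.range (m + 1), 1 / β ^ (i + 1) = 1) {z : ℕ → Bool} (hz : NoRun m z)
    {q Q j : ℕ} (hq : q ≤ Q) (hj : j < m) (h1 : z q = false)
    (h2 : z (q + j + 1) = false) :
    pv β z ≤ 1 - (2 / β - 1) / β ^ Q := by
  have h0 : 0 < β := by linarith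
  set D : ℕ → Bool := fun i => decide (i % (m + 1) ≠ 0) with hD
  have hDrun : ∀ i, ∃ l ≤ m, D (i + l) = false := by
    intro i
    refine ⟨m - (i + m) % (m + 1), by omega, ?_⟩
    have hlt := Nat.mod_lt (i + m) (show 0 < m + 1 by omega)
    have hdiv := Nat.div_add_mod (i + m) (m + 1)
    have : i + (m - (i + m) % (m + 1)) = (m + 1) * ((i + m) / (m + 1)) := by omega
    simp [hD, this]
  -- value of D
  have hDper : (fun i => D (i + (m + 1))) = D := by
    funext i; simp [hD]
  have hDv : pv β D = 1 / β := by
    have e := pv_split hβ D (m + 1)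
    rw [hDper, Finset.sum_range_succ'] at e
    have e1 : ∑ k ∈ Finset.range m, bd (D (k + 1)) / β ^ (k + 1 + 1) = ∑ k ∈ Finset.range m, 1 / β ^ (k + 1 + 1) := by
      refine Finset.sum_congr rfl (fun k hk => ?_)
      have hk := Finset.mem_range.mp hk
      have : D (k + 1) = true := by
        simp [hD, Nat.mod_eq_of_lt (show k + 1 < m + 1 by omega)]
      rw [this, bd_true]
    have e2 : D 0 = false := by simp [hD]
    rw [Finset.sum_range_succ'] at hm
    have hgeo : (∑ k ∈ Finset.range m, 1 / β ^ (k + 1 + 1)) = 1 - 1 / β := by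
      have : 1 / β ^ (0 + 1) = 1 / β := by simp
      linarith
    rw [e1, e2, bd_false, hgeo, zero_div, add_zero] at e
    -- 1/β^(m+1) : from (1-1/β)·... compute
    have hA : ∀ n : ℕ, (β - 1) * ∑ k ∈ Finset.range n, 1 / β ^ (k + 1 + 1) = 1 / β - 1 / β ^ (n + 1) := by
      intro n
      induction n with
      | zero => simp
      | succ n ih =>
        rw [Finset.sum_range_succ, mul_add, ih]
        field_simp
        ring
    have hA' := hA m
    rw [hgeo] at hA'
    have hp : 1 / β ^ (m + 1) = 1 / β - (β - 1) * (1 - 1 / β) := by linarith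
    have e' : pv β D = 1 - 1 / β + pv β D * (1 / β ^ (m+1)) := by
      rw [mul_one_div]; exact e
    rw [hp] at e'
    have hx : (1 - 1/β) * (1 + (β - 1)) ≠ 0 := by
      have : 1 / β < 1 := by rw [div_lt_one h0]; exact hβ
      have : 0 < 1 - 1/β := by linarith
      have : 0 < 1 + (β - 1) := by linarith
      positivity
    apply mul_left_cancel₀ hx
    have : (1 - 1/β) * (1 + (β - 1)) * pv β D = 1 - 1/β := by linear_combination e'
    rw [this]; field_simp; ring
  -- comparison sequence
  set y : ℕ → Bool := fun i => if i < q then z i else D (i - q) with hy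
  have hyrun : NoRun m y := by
    intro i
    by_cases hi : q ≤ i
    · obtain ⟨l, hl, h⟩ := hDrun (i - q)
      refine ⟨l, hl, ?_⟩
      simp only [hy]
      rw [if_neg (by omega), ← h]; congr 1; omega
    · by_cases hi2 : q ≤ i + m
      · refine ⟨q - i, by omega, ?_⟩
        have : i + (q - i) = q := by omega
        simp [hy, this, hD]
      · obtain ⟨l, hl, h⟩ := hz i
        refine ⟨l, hl, ?_⟩
        simp only [hy]
        rw [if_pos (by omega), h]
  have hyv := pv_le_one hβ hm hyrun
  rw [pv_split hβ y q] at hyv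
  have e1 : ∑ x ∈ Finset.range q, bd (y x) / β ^ (x + 1) = ∑ x ∈ Finset.range q, bd (z x) / β ^ (x + 1) := by
    refine Finset.sum_congr rfl (fun x hx => ?_)
    simp only [hy]; rw [if_pos (Finset.mem_range.mp hx)]
  have e2 : (fun i => y (i + q)) = D := by
    funext i; simp [hy]
  rw [e1, e2, hDv] at hyv
  -- tail of z
  have htail : pv β (fun i => z (i + q)) ≤ 1 - 1 / β := by
    rw [pv_split hβ _ (j + 2)]
    have h3 : pv β (fun i => z (i + (j+2) + q)) ≤ 1 := pv_le_one hβ hm (by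
      have := hz.shift (j + 2 + q)
      convert this using 3
      omega)
    have h4 : ∑ i ∈ Finset.range (j+2), bd (z (i + q)) / β ^ (i + 1) ≤ ∑ i ∈ Finset.range j, 1 / β ^ (i + 1 + 1) := by
      rw [Finset.sum_range_succ, Finset.sum_range_succ']
      have : z (j + 1 + q) = false := by rw [← h2]; congr 1; omega
      rw [this, zero_add, h1, bd_false]
      simp only [zero_div, add_zero]
      refine Finset.sum_le_sum (fun i _ => ?_)
      have := bd_le_one (z (i + 1 + q)); gcongr
    have h5 : ∑ i ∈ Finset.range (j+1), 1 / β ^ (i + 1 + 1) ≤ ∑ i ∈ Finset.range m, 1 / β ^ (i + 1 + 1) := by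
      refine Finset.sum_le_sum_of_subset_of_nonneg (by simpa using hj) (fun i _ _ => by positivity)
    rw [Finset.sum_range_succ] at h5
    rw [Finset.sum_range_succ'] at hm
    have h6 : pv β (fun i => z (i + (j+2) + q)) / β ^ (j+2) ≤ 1 / β ^ (j+2) := by gcongr
    have : 1 / β ^ (0 + 1) = 1 / β := by simp
    have h7 : 1 / β ^ (j + 2) = 1 / β ^ (j + 1 + 1) := rfl
    linarith
  rw [pv_split hβ z q]
  have e3 : pv β (fun i => z (i + q)) / β ^ q ≤ (1 - 1 / β) / β ^ q := by gcongr
  have e4 : (2 / β - 1) / β ^ Q ≤ (2 / β - 1) / β ^ q := by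
    have : 0 ≤ 2 / β - 1 := by rw [sub_nonneg, le_div_iff₀ h0]; linarith
    gcongr
    exact hβ.le
  have e5 : (2 / β - 1) / β ^ q = 1 / β / β ^ q - (1 - 1 / β) / β ^ q := by ring
  linarith

lemma Tbeta_pv {β : ℝ} (hβ : 1 < β) (z : ℕ → Bool) (h : pv β (fun i => z (i + 1)) < 1) :
    Tbeta β (pv β z) = pv β (fun i => z (i + 1)) := by
  have h0 : 0 < β := by linarith
  have e := pv_split hβ z 1
  have e2 : β * pv β z = bd (z 0) + pv β (fun i => z (i + 1)) := by
    rw [e]; simp; field_simp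
  unfold Tbeta
  rw [e2, Int.fract_eq_iff]
  refine ⟨pv_nonneg hβ _, h, ?_⟩
  cases z 0
  · exact ⟨0, by simp [bd]⟩
  · exact ⟨1, by simp [bd]⟩

lemma Tbeta_iter_pv {β : ℝ} (hβ : 1 < β) (z : ℕ → Bool) (h : ∀ n, pv β (fun i => z (i + n)) < 1)
    (n : ℕ) : (Tbeta β)^[n] (pv β z) = pv β (fun i => z (i + n)) := by
  induction n with
  | zero => rfl
  | succ n ih =>
    rw [Function.iterate_succ_apply', ih]
    have e : (fun i => z (i + (n + 1))) = (fun i => (fun i => z (i + n)) (i + 1)) := by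
      funext i; show z _ = z _; congr 1; omega
    have h1 := h (n + 1)
    rw [e] at h1 ⊢
    exact Tbeta_pv hβ _ h1

lemma pv_mem_K {β t : ℝ} (hβ : 1 < β) (z : ℕ → Bool) (h : ∀ n, pv β (fun i => z (i + n)) < 1)
    (h' : ∀ n, t ≤ pv β (fun i => z (i + n))) : pv β z ∈ Kset β t := by
  refine ⟨⟨pv_nonneg hβ z, h 0⟩, fun n => ?_⟩
  rw [Tbeta_iter_pv hβ z h]
  exact h' n

def GoodOn (S : ℕ → Bool) (m : ℕ) (f : ℕ → Bool) (a b : ℕ) : Prop :=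
  a < b ∧ f a = false ∧ (∀ i, a ≤ i → i + m < b → ∃ j ≤ m, f (i + j) = false) ∧
  ∀ i, a ≤ i → i < b → ∃ k, i + k < b ∧ (∀ l < k, f (i + l) = S l) ∧ f (i + k) = true ∧ S k = false

lemma holder_core {β : ℝ} (hβ : 1 < β) {b L : ℕ} (hb : 2 ≤ b) (hL : 1 ≤ L) {ε : ℝ} (hε : 0 < ε)
    (g : (ℕ → Fin b) → ℝ)
    (hg : ∀ x y : ℕ → Fin b, ∀ k, (∀ i < k, x i = y i) → x k ≠ y k →
      ε / β ^ ((k + 1) * L) ≤ |g x - g y|) :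
    ENNReal.ofReal (Real.log b / (L * Real.log β)) ≤ dimH (Set.range g) := by
  have h0 : 0 < β := by linarith
  have hlogβ : 0 < Real.log β := Real.log_pos hβ
  have hb1 : (1:ℝ) < b := by exact_mod_cast hb
  have hb0 : (0:ℝ) < b := by linarith
  have hlogb : 0 < Real.log b := Real.log_pos hb1
  have hL0 : (0:ℝ) < L := by exact_mod_cast hL
  set r : ℝ := Real.log b / (L * Real.log β) with hr
  have hr0 : 0 < r := by positivity
  have hpow : ∀ k : ℕ, (β ^ (k * L)) ^ r = (b:ℝ) ^ k := by
    intro k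
    rw [← Real.rpow_natCast, ← Real.rpow_mul h0.le, Real.rpow_def_of_pos h0, ← Real.rpow_natCast,
      Real.rpow_def_of_pos hb0]
    congr 1
    rw [hr]; push_cast; field_simp
  have first : ∀ x y : ℕ → Fin b, x ≠ y → ∃ k, (∀ i < k, x i = y i) ∧ x k ≠ y k := by
    intro x y hxy
    have hex : ∃ k, x k ≠ y k := by
      by_contra hcon; push Not at hcon; exact hxy (funext hcon)
    refine ⟨Nat.find hex, fun i hi => ?_, Nat.find_spec hex⟩
    have := Nat.find_min hex hi
    push Not at this
    exact this
  have hinj : Function.Injective g := by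
    intro x y hxy
    by_contra hne
    obtain ⟨k, h1, h2⟩ := first x y hne
    have := hg x y k h1 h2
    rw [hxy, sub_self, abs_zero] at this
    have : 0 < ε / β ^ ((k + 1) * L) := by positivity
    linarith
  have : NeZero b := ⟨by omega⟩
  set f : ℝ → ℝ := fun x => Real.ofDigits (Function.invFun g x) with hf
  have hfg : ∀ a, f (g a) = Real.ofDigits a := by
    intro a; simp only [hf]; rw [Function.leftInverse_invFun hinj a]
  set C : ℝ := b / ε ^ r with hC
  have hC0 : 0 < C := by positivity
  have hold : HolderOnWith C.toNNReal r.toNNReal f (Set.range g) := by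
    rintro _ ⟨x, rfl⟩ _ ⟨y, rfl⟩
    rw [hfg, hfg]
    by_cases hxy : x = y
    · rw [hxy, edist_self]; exact zero_le
    obtain ⟨k, h1, h2⟩ := first x y hxy
    have hd := hg x y k h1 h2
    have hu := Real.abs_ofDigits_sub_ofDigits_le h1
    rw [edist_dist, edist_dist, Real.dist_eq, Real.dist_eq, Real.coe_toNNReal _ hr0.le,
      ENNReal.ofReal_rpow_of_nonneg (abs_nonneg _) hr0.le]
    have : (C.toNNReal : ENNReal) = ENNReal.ofReal C := rfl
    rw [this, ← ENNReal.ofReal_mul hC0.le]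
    apply ENNReal.ofReal_le_ofReal
    refine hu.trans ?_
    have h3 : (ε / β ^ ((k + 1) * L)) ^ r ≤ |g x - g y| ^ r :=
      Real.rpow_le_rpow (by positivity) hd hr0.le
    rw [Real.div_rpow hε.le (by positivity), hpow] at h3
    have h4 : C * (ε ^ r / (b:ℝ) ^ (k + 1)) ≤ C * |g x - g y| ^ r := by gcongr
    refine le_trans (le_of_eq ?_) h4
    have : ε ^ r ≠ 0 := by positivity
    rw [hC]; field_simp; ring
  have himg : Set.Icc (0:ℝ) 1 ⊆ f '' Set.range g := by
    intro y hy
    obtain ⟨a, _, ha⟩ := Real.ofDigits_SurjOn (b := b) (by omega) hy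
    exact ⟨g a, ⟨a, rfl⟩, by rw [hfg, ha]⟩
  have h1 : dimH (Set.Icc (0:ℝ) 1) = 1 := by
    have := Real.dimH_of_nonempty_interior (E := ℝ) (s := Set.Icc (0:ℝ) 1) (by
      rw [interior_Icc]; exact ⟨1/2, by norm_num, by norm_num⟩)
    simpa using this
  have h2 := hold.dimH_image_le (by simpa using hr0)
  have h3 : (1 : ENNReal) ≤ dimH (Set.range g) / (r.toNNReal : ENNReal) := by
    rw [← h1]; exact (dimH_mono himg).trans h2
  have h4 : (r.toNNReal : ENNReal) ≠ 0 := by simpa using hr0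
  rw [ENNReal.le_div_iff_mul_le (Or.inl h4) (Or.inl ENNReal.coe_ne_top), one_mul] at h3
  exact h3

lemma dim_lower {β : ℝ} (hβ : 1 < β) (hβ2 : β < 2) {m : ℕ}
    (hm : ∑ i ∈ Finset.range (m + 1), 1 / β ^ (i + 1) = 1) {S : ℕ → Bool} (hS : NoRun m S)
    (hS1 : S 0 = false) {j : ℕ} (hj : j < m) (hS2 : S (j + 1) = false)
    {b L : ℕ} (hb : 2 ≤ b) (A : Fin b → ℕ → Bool)
    (hA : ∀ u v, u ≠ v → ∃ i < L, A u i ≠ A v i) (hG : ∀ u, GoodOn S m (A u) 0 L)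
    (hM : ∀ u, ∃ q, q + m < L ∧ ∀ l ≤ m, A u (q + l) = S l) :
    ENNReal.ofReal (Real.log b / (L * Real.log β)) ≤ dimH (Kset β (pv β S)) := by
  have h0 : 0 < β := by linarith
  have hL : 0 < L := (hG ⟨0, by omega⟩).1
  set Z : (ℕ → Fin b) → ℕ → Bool := fun a i => A (a (i / L)) (i % L) with hZ
  have Zval : ∀ a q i, i < L → Z a (q * L + i) = A (a q) i := by
    intro a q i hi
    simp only [hZ]
    rw [mul_comm, Nat.mul_add_div hL, Nat.mul_add_mod, Nat.div_eq_of_lt hi, Nat.mod_eq_of_lt hi,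
      add_zero]
  have dec : ∀ n, ∃ q i, i < L ∧ n = q * L + i := fun n =>
    ⟨n / L, n % L, Nat.mod_lt _ hL, by rw [mul_comm]; exact (Nat.div_add_mod n L).symm⟩
  have Zrun : ∀ a, NoRun m (Z a) := by
    intro a n
    obtain ⟨q, i, hi, rfl⟩ := dec n
    by_cases him : i + m < L
    · obtain ⟨l, hl, h⟩ := (hG (a q)).2.2.1 i (Nat.zero_le _) him
      exact ⟨l, hl, by rw [add_assoc, Zval a q (i + l) (by omega), h]⟩
    · refine ⟨L - i, by omega, ?_⟩
      have : q * L + i + (L - i) = (q + 1) * L + 0 := by rw [add_mul]; omega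
      rw [this, Zval a _ 0 hL]
      exact (hG _).2.1
  have Zdec : ∀ a n, ∃ k, (∀ l < k, Z a (n + l) = S l) ∧ Z a (n + k) = true ∧ S k = false := by
    intro a n
    obtain ⟨q, i, hi, rfl⟩ := dec n
    obtain ⟨k, hk, h1, h2, h3⟩ := (hG (a q)).2.2.2 i (Nat.zero_le _) hi
    refine ⟨k, fun l hl => ?_, ?_, h3⟩
    · rw [add_assoc, Zval a q _ (by omega), h1 l hl]
    · rw [add_assoc, Zval a q _ (by omega), h2]
  set ε := (2 / β - 1) / β ^ (2 * L) with hε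
  have hε0 : 0 < ε := by
    have : 0 < 2 / β - 1 := by rw [sub_pos, lt_div_iff₀ h0]; linarith
    positivity
  have Zgap : ∀ a n, pv β (fun i => Z a (i + n)) ≤ 1 - ε := by
    intro a n
    obtain ⟨q, i, hi, rfl⟩ := dec n
    obtain ⟨p, hp, h⟩ := hM (a (q + 1))
    have hx : ∀ x ≤ m, Z a ((L - i + p) + x + (q * L + i)) = S x := by
      intro x hx
      rw [← h x hx, ← Zval a (q+1) (p + x) (by omega)]
      congr 1
      rw [add_mul]; omega
    refine pv_gap hβ hβ2 hm ((Zrun a).shift _) (q := L - i + p) (Q := 2 * L) (j := j) (by omega) hj ?_ ?_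
    · have := hx 0 (by omega); rw [hS1] at this; simpa using this
    · have := hx (j + 1) (by omega); rw [hS2] at this; exact this
  have hsub : Set.range (fun a => pv β (Z a)) ⊆ Kset β (pv β S) := by
    rintro _ ⟨a, rfl⟩
    refine pv_mem_K hβ _ (fun n => ?_) (fun n => ?_)
    · linarith [Zgap a n]
    · obtain ⟨k, h1, h2, h3⟩ := Zdec a n
      have := pv_lt_of_lex hβ (y := S) (z := fun i => Z a (i + n)) (k := k) (c := 1)
        (fun l hl => by rw [← h1 l hl, add_comm]) h3 (by rw [← h2, add_comm])
        (pv_le_one hβ hm (hS.shift _))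
      rw [sub_self, zero_div] at this
      linarith
  refine le_trans ?_ (dimH_mono hsub)
  apply holder_core hβ hb hL hε0
  intro x y k hxy hk
  obtain ⟨i0, hi0L, hi0⟩ := hA _ _ hk
  have hex : ∃ i, A (x k) i ≠ A (y k) i := ⟨i0, hi0⟩
  set i := Nat.find hex with hi
  have hiL : i < L := (Nat.find_min' hex hi0).trans_lt hi0L
  have hi1 : A (x k) i ≠ A (y k) i := Nat.find_spec hex
  have hi2 : ∀ l < i, A (x k) l = A (y k) l := by
    intro l hl
    have := Nat.find_min hex hl
    push Not at this; exact this
  have hagree : ∀ l < k * L + i, Z x l = Z y l := by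
    intro l hl
    obtain ⟨q, e, he, rfl⟩ := dec l
    rw [Zval _ _ _ he, Zval _ _ _ he]
    have hqk : q ≤ k := by
      by_contra hcon
      have : (k + 1) * L ≤ q * L := Nat.mul_le_mul_right _ (by omega)
      rw [add_mul] at this; omega
    rcases hqk.lt_or_eq with h | h
    · rw [hxy q h]
    · subst h; exact hi2 e (by omega)
  have hx' := Zval x k i hiL
  have hy' := Zval y k i hiL
  have hpw : ε / β ^ ((k + 1) * L) ≤ (1 - (1 - ε)) / β ^ (k * L + i + 1) := by
    rw [sub_sub_cancel]
    gcongr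
    · exact hβ.le
    · rw [add_mul]; omega
  cases hc : A (x k) i with
  | true =>
    have hc' : A (y k) i = false := by
      cases h : A (y k) i with
      | true => rw [hc, h] at hi1; exact absurd rfl hi1
      | false => rfl
    have := pv_lt_of_lex hβ (y := Z y) (z := Z x) (k := k * L + i) (c := 1 - ε)
      (fun l hl => (hagree l hl).symm) (by rw [hy', hc']) (by rw [hx', hc]) (Zgap y _)
    exact (hpw.trans this).trans (le_abs_self _)
  | false =>
    have hc' : A (y k) i = true := by
      cases h : A (y k) i with
      | false => rw [hc, h] at hi1; exact absurd rfl hi1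
      | true => rfl
    have := pv_lt_of_lex hβ (y := Z x) (z := Z y) (k := k * L + i) (c := 1 - ε)
      (fun l hl => (hagree l hl)) (by rw [hx', hc]) (by rw [hy', hc']) (Zgap x _)
    rw [abs_sub_comm]
    exact (hpw.trans this).trans (le_abs_self _)

noncomputable def dig (β x : ℝ) (i : ℕ) : Bool := decide (1 ≤ β * (Tbeta β)^[i] x)

lemma iter_mem {β x : ℝ} (hx : x ∈ Set.Ico (0:ℝ) 1) (i : ℕ) : (Tbeta β)^[i] x ∈ Set.Ico (0:ℝ) 1 := by
  cases i with
  | zero => exact hx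
  | succ i =>
    rw [Function.iterate_succ_apply']
    exact ⟨Int.fract_nonneg _, Int.fract_lt_one _⟩

lemma iter_succ_dig {β x : ℝ} (hβ : 1 < β) (hβ2 : β < 2) (hx : x ∈ Set.Ico (0:ℝ) 1) (i : ℕ) :
    (Tbeta β)^[i + 1] x = β * (Tbeta β)^[i] x - bd (dig β x i) := by
  have h := iter_mem (β := β) hx i
  rw [Function.iterate_succ_apply']
  unfold dig
  set y := (Tbeta β)^[i] x
  have h1 : 0 ≤ β * y := mul_nonneg (by linarith) h.1
  have h2 : β * y < 2 := by nlinarith [h.1, h.2]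
  unfold Tbeta
  by_cases hc : 1 ≤ β * y
  · rw [decide_eq_true hc, bd_true, Int.fract_eq_iff]
    exact ⟨by linarith, by linarith, 1, by simp⟩
  · rw [decide_eq_false hc, bd_false, Int.fract_eq_iff]
    push Not at hc
    exact ⟨by linarith, by linarith, 0, by simp⟩

lemma dig_split {β x : ℝ} (hβ : 1 < β) (hβ2 : β < 2) (hx : x ∈ Set.Ico (0:ℝ) 1) (i n : ℕ) :
    (Tbeta β)^[i] x = ∑ l ∈ Finset.range n, bd (dig β x (i + l)) / β ^ (l + 1)
      + (Tbeta β)^[i + n] x / β ^ n := by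
  have h0 : 0 < β := by linarith
  induction n with
  | zero => simp
  | succ n ih =>
    rw [ih, Finset.sum_range_succ, ← add_assoc i n 1, iter_succ_dig hβ hβ2 hx (i + n)]
    field_simp
    ring

lemma dim_upper {β : ℝ} (hβ : 1 < β) (hβ2 : β < 2) {n : ℕ} (hn : 1 ≤ n) (W : Finset (List Bool))
    (hW : W.Nonempty) (K : Set ℝ) (hK : K ⊆ Set.Ico 0 1)
    (hdig : ∀ x ∈ K, ∀ i, List.ofFn (fun l : Fin n => dig β x (i + l)) ∈ W) :
    dimH K ≤ ENNReal.ofReal (Real.log W.card / (n * Real.log β)) := by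
  have h0 : 0 < β := by linarith
  have hlogβ : 0 < Real.log β := Real.log_pos hβ
  have hn0 : (0:ℝ) < n := by exact_mod_cast hn
  have hN1 : (1:ℝ) ≤ W.card := by exact_mod_cast hW.card_pos
  have hN0 : (0:ℝ) < W.card := by linarith
  set d : ℝ := Real.log W.card / (n * Real.log β) with hd
  have hd0 : 0 ≤ d := by have := Real.log_nonneg hN1; positivity
  have hpow : ∀ k : ℕ, (β ^ (k * n)) ^ d = (W.card:ℝ) ^ k := by
    intro k
    rw [← Real.rpow_natCast, ← Real.rpow_mul h0.le, Real.rpow_def_of_pos h0, ← Real.rpow_natCast,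
      Real.rpow_def_of_pos hN0]
    congr 1
    rw [hd]; push_cast; field_simp
  set t : ∀ k : ℕ, (Fin k → W) → Set ℝ := fun k v => {x | x ∈ Set.Ico (0:ℝ) 1 ∧
    ∀ q : Fin k, List.ofFn (fun l : Fin n => dig β x (q * n + l)) = (v q : List Bool)} with ht
  have hdiam : ∀ k v, Metric.ediam (t k v) ≤ ENNReal.ofReal (1 / β ^ (k * n)) := by
    intro k v
    refine Metric.ediam_le (fun x hx y hy => ?_)
    rw [edist_dist]
    apply ENNReal.ofReal_le_ofReal
    have hag : ∀ i < k * n, dig β x i = dig β y i := by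
      intro i hi
      have hq : i / n < k := Nat.div_lt_of_lt_mul (by rwa [mul_comm] at hi)
      have e := (hx.2 ⟨i / n, hq⟩).trans (hy.2 ⟨i / n, hq⟩).symm
      have e2 := congrFun (List.ofFn_injective e) ⟨i % n, Nat.mod_lt _ hn⟩
      simp only at e2
      rwa [mul_comm, Nat.div_add_mod] at e2
    have ex := dig_split hβ hβ2 hx.1 0 (k * n)
    have ey := dig_split hβ hβ2 hy.1 0 (k * n)
    simp only [zero_add, Function.iterate_zero, id] at ex ey
    have es : ∑ l ∈ Finset.range (k * n), bd (dig β x l) / β ^ (l + 1)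
        = ∑ l ∈ Finset.range (k * n), bd (dig β y l) / β ^ (l + 1) := by
      refine Finset.sum_congr rfl (fun l hl => ?_)
      rw [hag l (Finset.mem_range.mp hl)]
    have hx1 := iter_mem (β := β) hx.1 (k * n)
    have hy1 := iter_mem (β := β) hy.1 (k * n)
    have e3 : x - y = ((Tbeta β)^[k * n] x - (Tbeta β)^[k * n] y) / β ^ (k * n) := by
      rw [sub_div]; linarith
    rw [Real.dist_eq, e3, abs_div, abs_of_pos (show 0 < β ^ (k * n) by positivity)]
    gcongr
    rw [abs_le]
    constructor <;> linarith [hx1.1, hx1.2, hy1.1, hy1.2]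
  have hr : Tendsto (fun k : ℕ => ENNReal.ofReal (1 / β ^ (k * n))) atTop (nhds 0) := by
    rw [← ENNReal.ofReal_zero]
    refine (ENNReal.continuous_ofReal.tendsto 0).comp ?_
    refine tendsto_const_nhds.div_atTop ?_
    refine (tendsto_pow_atTop_atTop_of_one_lt hβ).comp ?_
    exact tendsto_id.atTop_mul_const' (by omega)
  have hmain := MeasureTheory.Measure.hausdorffMeasure_le_liminf_sum d K
    (fun k : ℕ => ENNReal.ofReal (1 / β ^ (k * n))) hr t
    (Eventually.of_forall hdiam) (Eventually.of_forall (fun k x hx => by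
      rw [Set.mem_iUnion]
      exact ⟨fun q => ⟨_, hdig x hx (q * n)⟩, hK hx, fun q => rfl⟩))
  have hle : ∀ k : ℕ, ∑ v, Metric.ediam (t k v) ^ d ≤ 1 := by
    intro k
    calc ∑ v, Metric.ediam (t k v) ^ d ≤ ∑ v : Fin k → W, ENNReal.ofReal (1 / β ^ (k * n)) ^ d := by
          refine Finset.sum_le_sum (fun v _ => ?_)
          exact ENNReal.rpow_le_rpow (hdiam k v) hd0
      _ = 1 := by
          rw [Finset.sum_const, Finset.card_univ, Fintype.card_fun, Fintype.card_fin,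
            Fintype.card_coe, ENNReal.ofReal_rpow_of_nonneg (by positivity) hd0,
            Real.div_rpow (by norm_num) (by positivity), hpow, Real.one_rpow, nsmul_eq_mul,
            ← ENNReal.ofReal_natCast, ← ENNReal.ofReal_mul (by positivity)]
          push_cast
          rw [mul_one_div_cancel (by positivity), ENNReal.ofReal_one]
  have hfin : MeasureTheory.Measure.hausdorffMeasure d K ≠ ⊤ := by
    refine ne_top_of_le_ne_top ENNReal.one_ne_top (hmain.trans ?_)
    refine liminf_le_of_le (by isBoundedDefault) (fun c hc => ?_)
    obtain ⟨k, hk⟩ := hc.exists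
    exact hk.trans (hle k)
  have := dimH_le_of_hausdorffMeasure_ne_top (s := K) (d := d.toNNReal) (by
    rw [Real.coe_toNNReal _ hd0]; exact hfin)
  exact this

def Adm (S : ℕ → Bool) (m : ℕ) (w : List Bool) : Prop :=
  (∀ i, i + m < w.length → ∃ j ≤ m, w.getD (i + j) false = false) ∧
  ∀ i k, i + k < w.length → (∀ l < k, w.getD (i + l) false = S l) → S k = true →
    w.getD (i + k) false = true

def Avoid (S : ℕ → Bool) (H : ℕ) (w : List Bool) : Prop :=
  ∀ i, i + H ≤ w.length → ∃ l < H, w.getD (i + l) false ≠ S l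

def Good (S : ℕ → Bool) (m : ℕ) (w : List Bool) : Prop :=
  GoodOn S m (fun i => w.getD i false) 0 w.length

lemma getD_left (x y : List Bool) (i : ℕ) (h : i < x.length) :
    (x ++ y).getD i false = x.getD i false := List.getD_append _ _ _ _ h

lemma getD_right (x y : List Bool) (i : ℕ) :
    (x ++ y).getD (x.length + i) false = y.getD i false := by
  rw [List.getD_append_right _ _ _ _ (by omega)]; congr 1; omega

lemma getD_right' (x y : List Bool) (n i : ℕ) (h : x.length = n) :
    (x ++ y).getD (n + i) false = y.getD i false := by
  subst h; exact getD_right x y i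

lemma Adm.left {S : ℕ → Bool} {m : ℕ} {x y : List Bool} (h : Adm S m (x ++ y)) : Adm S m x := by
  have hl : (x ++ y).length = x.length + y.length := List.length_append
  refine ⟨fun i hi => ?_, fun i k hk h1 h2 => ?_⟩
  · obtain ⟨j, hj, h3⟩ := h.1 i (by omega)
    exact ⟨j, hj, (getD_left x y _ (by omega)).symm.trans h3⟩
  · have := h.2 i k (by omega) (fun l hl => by rw [← h1 l hl, getD_left]; omega) h2
    rwa [getD_left _ _ _ hk] at this

lemma Adm.right {S : ℕ → Bool} {m : ℕ} {x y : List Bool} (h : Adm S m (x ++ y)) : Adm S m y := by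
  have hl : (x ++ y).length = x.length + y.length := List.length_append
  refine ⟨fun i hi => ?_, fun i k hk h1 h2 => ?_⟩
  · obtain ⟨j, hj, h3⟩ := h.1 (x.length + i) (by omega)
    exact ⟨j, hj, by rw [add_assoc, getD_right] at h3; exact h3⟩
  · have := h.2 (x.length + i) k (by omega) (fun l hl => by rw [← h1 l hl, add_assoc, getD_right]) h2
    rwa [add_assoc, getD_right] at this

lemma Good.append {S : ℕ → Bool} {m : ℕ} {x y : List Bool} (hx : Good S m x) (hy : Good S m y) :
    Good S m (x ++ y) := by
  have hl : (x ++ y).length = x.length + y.length := List.length_append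
  obtain ⟨x1, x2, x3, x4⟩ := hx
  obtain ⟨y1, y2, y3, y4⟩ := hy
  simp only at x2 x3 x4 y2 y3 y4
  refine ⟨by omega, ?_, fun i _ hi => ?_, fun i _ hi => ?_⟩
  · simp only; rw [getD_left _ _ _ x1, x2]
  · simp only
    by_cases h1 : i + m < x.length
    · obtain ⟨j, hj, h⟩ := x3 i (Nat.zero_le _) h1
      exact ⟨j, hj, by rw [getD_left _ _ _ (by omega), h]⟩
    by_cases h2 : i < x.length
    · refine ⟨x.length - i, by omega, ?_⟩
      have : i + (x.length - i) = x.length + 0 := by omega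
      rw [this, getD_right, y2]
    · obtain ⟨i', rfl⟩ := Nat.exists_eq_add_of_le (not_lt.mp h2)
      obtain ⟨j, hj, h⟩ := y3 i' (Nat.zero_le _) (by omega)
      exact ⟨j, hj, by rw [add_assoc, getD_right, h]⟩
  · simp only
    by_cases h2 : i < x.length
    · obtain ⟨k, hk, h3, h4, h5⟩ := x4 i (Nat.zero_le _) h2
      refine ⟨k, by omega, fun l hl => ?_, ?_, h5⟩
      · rw [getD_left _ _ _ (by omega), h3 l hl]
      · rw [getD_left _ _ _ (by omega), h4]
    · obtain ⟨i', rfl⟩ := Nat.exists_eq_add_of_le (not_lt.mp h2)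
      obtain ⟨k, hk, h3, h4, h5⟩ := y4 i' (Nat.zero_le _) (by omega)
      refine ⟨k, by omega, fun l hl => ?_, ?_, h5⟩
      · rw [add_assoc, getD_right, h3 l hl]
      · rw [add_assoc, getD_right, h4]

structure SData (S : ℕ → Bool) (m j K : ℕ) : Prop where
  s0 : S 0 = false
  hj : j < m
  s1 : ∀ i < j, S (i + 1) = true
  s2 : S (j + 1) = false
  lyn : ∀ n k, (∀ l < k, S (n + l) = S l) → S k = true → S (n + k) = true
  del : ∀ n, ∃ k < K, (∀ l < k, S (n + l) = decide (l % (m + 1) ≠ m)) ∧ S (n + k) = false ∧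
    k % (m + 1) ≠ m

lemma SData.noRun {S : ℕ → Bool} {m j K : ℕ} (h : SData S m j K) : NoRun m S := by
  intro i
  obtain ⟨k, _, h1, h2, h3⟩ := h.del i
  by_cases hk : k ≤ m
  · exact ⟨k, hk, h2⟩
  · refine ⟨m, le_rfl, ?_⟩
    rw [h1 m (by omega)]; simp

/-- the word `(0 1^m)^r` -/
def Uw (m r : ℕ) : List Bool := (List.range (r * (m + 1))).map (fun i => decide (i % (m + 1) ≠ 0))

lemma Uw_length (m r : ℕ) : (Uw m r).length = r * (m + 1) := by simp [Uw]

lemma Uw_getD (m r i : ℕ) (h : i < r * (m + 1)) :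
    (Uw m r).getD i false = decide (i % (m + 1) ≠ 0) := by
  unfold Uw
  rw [List.getD_eq_getElem _ _ (by simpa using h)]
  simp

def Pw (m r a b : ℕ) (w : List Bool) : List Bool :=
  (false :: List.replicate a true) ++ (w ++ (List.replicate b true ++ Uw m r))

lemma Pw_length (m r a b : ℕ) (w : List Bool) :
    (Pw m r a b w).length = 1 + a + w.length + b + r * (m + 1) := by
  simp [Pw, Uw_length]; omega

lemma Pw_getD_w (m r a b : ℕ) (w : List Bool) (i : ℕ) (h : i < w.length) :
    (Pw m r a b w).getD (1 + a + i) false = w.getD i false := by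
  unfold Pw
  rw [getD_right' _ _ (1 + a) _ (by simp; omega), getD_left _ _ _ h]

lemma Pw_getD_b (m r a b : ℕ) (w : List Bool) (i : ℕ) (h : i < b) :
    (Pw m r a b w).getD (1 + a + w.length + i) false = true := by
  unfold Pw
  rw [add_assoc, getD_right' _ _ (1 + a) _ (by simp; omega), getD_right,
    getD_left _ _ _ (by simpa using h), List.getD_eq_getElem _ _ (by simpa using h)]
  simp

lemma Pw_getD_u (m r a b : ℕ) (w : List Bool) (i : ℕ) (h : i < r * (m + 1)) :
    (Pw m r a b w).getD (1 + a + w.length + b + i) false = decide (i % (m + 1) ≠ 0) := by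
  unfold Pw
  have e : 1 + a + w.length + b + i = (1 + a) + (w.length + (b + i)) := by omega
  rw [e, getD_right' _ _ (1 + a) _ (by simp; omega), getD_right,
    getD_right' _ _ b _ (by simp), Uw_getD _ _ _ h]

lemma Pw_getD_0 (m r a b : ℕ) (w : List Bool) : (Pw m r a b w).getD 0 false = false := by
  simp [Pw]

lemma Pw_getD_a (m r a b : ℕ) (w : List Bool) (i : ℕ) (h : i < a) :
    (Pw m r a b w).getD (1 + i) false = true := by
  unfold Pw
  rw [getD_left _ _ _ (by simp; omega), List.getD_eq_getElem _ _ (by simp; omega)]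
  simp [add_comm 1 i]

/-- core function version -/
lemma good_core {S : ℕ → Bool} {m j K r : ℕ} (h : SData S m j K) (hr : K < r * (m + 1)) (hr1 : 1 ≤ r)
    (f : ℕ → Bool) (n a b c t : ℕ)
    (hadm1 : ∀ i, i + m < n → ∃ l ≤ m, f (1 + a + (i + l)) = false)
    (hadm2 : ∀ i k, i + k < n → (∀ l < k, f (1 + a + (i + l)) = S l) → S k = true →
      f (1 + a + (i + k)) = true)
    (f0 : f 0 = false) (fa : ∀ i < a, f (1 + i) = true) (fb : ∀ i < b, f (1 + a + n + i) = true)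
    (fu : ∀ i < r * (m + 1), f (1 + a + n + b + i) = decide (i % (m + 1) ≠ 0))
    (hc : ∀ i < c, f (1 + a + i) = true) (hcn : c ≤ n) (hac : a + c = m)
    (ht : ∀ i < t, f (1 + a + (n - t + i)) = true) (htn : t ≤ n)
    (hcase : (n = c ∧ b = 0) ∨
      (c < n ∧ t < n ∧ f (1 + a + c) = false ∧ f (1 + a + (n - t - 1)) = false ∧ b + t = m)) :
    GoodOn S m f 0 (1 + a + n + b + r * (m + 1)) := by
  have hu0 : f (1 + a + n + b) = false := by
    have := fu 0 (by omega); simpa using this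
  have hum : m + 1 ≤ r * (m + 1) := Nat.le_mul_of_pos_left _ hr1
  -- 01^m decided
  have zero1 : ∀ i, f i = false → (∀ l < m, f (i + 1 + l) = true) →
      i + m < 1 + a + n + b + r * (m + 1) → ∃ k, i + k < 1 + a + n + b + r * (m + 1) ∧
      (∀ l < k, f (i + l) = S l) ∧ f (i + k) = true ∧ S k = false := by
    intro i h1 h2 h3
    have hjm := h.hj
    refine ⟨j + 1, by omega, fun l hl => ?_, ?_, h.s2⟩
    · cases l with
      | zero => rw [h.s0]; exact h1
      | succ l =>
        have := h2 l (by omega)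
        rw [h.s1 l (by omega), ← this]; congr 1; omega
    · have := h2 j (by omega)
      rw [← this]; congr 1; omega
  refine ⟨by omega, f0, fun i _ hi => ?_, fun i _ hi => ?_⟩
  · by_cases hi0 : i = 0
    · exact ⟨0, Nat.zero_le _, by subst hi0; simpa using f0⟩
    by_cases hi1 : 1 + a + n + b ≤ i
    · obtain ⟨i', rfl⟩ := Nat.exists_eq_add_of_le hi1
      refine ⟨m - (i' + m) % (m + 1), by omega, ?_⟩
      have hlt := Nat.mod_lt (i' + m) (show 0 < m + 1 by omega)
      have hdiv := Nat.div_add_mod (i' + m) (m + 1)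
      have e : i' + (m - (i' + m) % (m + 1)) = (m + 1) * ((i' + m) / (m + 1)) := by omega
      rw [add_assoc, fu _ (by omega), e]; simp
    have hit : ∀ p, f p = false → i ≤ p → p ≤ i + m → ∃ l ≤ m, f (i + l) = false := by
      intro p h1 h2 h3
      exact ⟨p - i, by omega, by rw [← h1]; congr 1; omega⟩
    rcases hcase with ⟨h1, h2⟩ | ⟨h1, h2, h3, h4, h5⟩
    · exact hit _ hu0 (by omega) (by omega)
    · by_cases q1 : i ≤ m + 1
      · exact hit _ h3 (by omega) (by omega)
      by_cases q2 : i + m < 1 + a + n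
      · obtain ⟨l, hl, h6⟩ := hadm1 (i - (1 + a)) (by omega)
        exact ⟨l, hl, by rw [← h6]; congr 1; omega⟩
      by_cases q3 : i ≤ 1 + a + (n - t - 1)
      · exact hit _ h4 q3 (by omega)
      · exact hit _ hu0 (by omega) (by omega)
  · cases hfi : f i with
    | true => exact ⟨0, by omega, fun l hl => absurd hl (Nat.not_lt_zero _), hfi, h.s0⟩
    | false =>
    by_cases hi0 : i = 0
    · subst hi0
      refine zero1 0 f0 (fun l hl => ?_) (by omega)
      by_cases hla : l < a
      · rw [zero_add]; exact fa l hla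
      · have := hc (l - a) (by omega)
        rw [← this]; congr 1; omega
    by_cases hia : i < 1 + a
    · have := fa (i - 1) (by omega)
      have e : 1 + (i - 1) = i := by omega
      rw [e, hfi] at this; cases this
    by_cases hiu : 1 + a + n + b ≤ i
    · obtain ⟨i', rfl⟩ := Nat.exists_eq_add_of_le hiu
      have hi' : i' < r * (m + 1) := by omega
      rw [fu i' hi'] at hfi
      have hmod : i' % (m + 1) = 0 := by simpa using hfi
      obtain ⟨q, rfl⟩ := Nat.dvd_of_mod_eq_zero hmod
      have hq : q < r := by
        by_contra hcon
        have : (m + 1) * r ≤ (m + 1) * q := Nat.mul_le_mul_left _ (not_lt.mp hcon)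
        rw [mul_comm] at this; omega
      have hq2 : (m + 1) * q + (m + 1) ≤ r * (m + 1) := by
        have : (m + 1) * (q + 1) ≤ (m + 1) * r := Nat.mul_le_mul_left _ hq
        rw [mul_comm r]; linarith [mul_add (m+1) q 1]
      refine zero1 _ (by rw [fu _ hi']; simp) (fun l hl => ?_) (by omega)
      have e : 1 + a + n + b + (m + 1) * q + 1 + l = 1 + a + n + b + ((m + 1) * q + (1 + l)) := by omega
      rw [e, fu _ (by omega), Nat.mul_add_mod, Nat.mod_eq_of_lt (by omega)]
      simp
    by_cases hib : 1 + a + n ≤ i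
    · have := fb (i - (1 + a + n)) (by omega)
      have e : 1 + a + n + (i - (1 + a + n)) = i := by omega
      rw [e, hfi] at this; cases this
    -- i inside w
    obtain ⟨i', rfl⟩ := Nat.exists_eq_add_of_le (not_lt.mp hia)
    have hi' : i' < n := by omega
    by_cases hex : ∃ k, i' + k < n ∧ f (1 + a + (i' + k)) ≠ S k
    · have hk := Nat.find_spec hex
      have hmin : ∀ l < Nat.find hex, f (1 + a + (i' + l)) = S l := by
        intro l hl
        have := Nat.find_min hex hl
        push Not at this
        exact this (by omega)
      set k := Nat.find hex
      have hS : S k = false := by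
        by_contra hcon
        have hSk : S k = true := by simpa using hcon
        exact hk.2 ((hadm2 i' k hk.1 hmin hSk).trans hSk.symm)
      refine ⟨k, by omega, fun l hl => ?_, ?_, hS⟩
      · rw [add_assoc]; exact hmin l hl
      · rw [add_assoc]
        have := hk.2
        rw [hS] at this
        simpa using this
    · push Not at hex
      rcases hcase with ⟨h1, h2⟩ | ⟨h1, h2, h3, h4, h5⟩
      · rw [hc i' (by omega)] at hfi; cases hfi
      have hit : i' < n - t := by
        by_contra hcon
        have := ht (i' - (n - t)) (by omega)
        have e : n - t + (i' - (n - t)) = i' := by omega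
        rw [e, hfi] at this; cases this
      obtain ⟨k, hkK, k1, k2, k3⟩ := h.del (n - t - i')
      have hkt : t ≤ k := by
        by_contra hcon
        have e1 := ht k (by omega)
        have e2 := hex (n - t - i' + k) (by omega)
        rw [k2] at e2
        have e : i' + (n - t - i' + k) = n - t + k := by omega
        rw [e, e1] at e2; cases e2
      -- f after w - t equals δ
      have fd : ∀ x, t ≤ x → x < m + r * (m + 1) → f (1 + a + (n - t + x)) = decide (x % (m + 1) ≠ m) := by
        intro x hx1 hx2
        by_cases hxm : x < m
        · have := fb (x - t) (by omega)
          have e : 1 + a + (n - t + x) = 1 + a + n + (x - t) := by omega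
          rw [e, this, Nat.mod_eq_of_lt (by omega)]
          symm; simp; omega
        · obtain ⟨y, rfl⟩ := Nat.exists_eq_add_of_le (not_lt.mp hxm)
          have e : 1 + a + (n - t + (m + y)) = 1 + a + n + b + y := by omega
          rw [e, fu y (by omega)]
          congr 1
          have hy := Nat.mod_lt y (show 0 < m + 1 by omega)
          have : (m + y) % (m + 1) = (m + y % (m + 1)) % (m + 1) := by simp
          rw [this]
          generalize y % (m + 1) = z at hy ⊢
          by_cases hy0 : z = 0
          · rw [hy0, add_zero, Nat.mod_eq_of_lt (by omega)]; simp
          · have : m + z = (z - 1) + (m + 1) := by omega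
            rw [this, Nat.add_mod_right, Nat.mod_eq_of_lt (by omega)]
            simp only [eq_iff_iff]; constructor
            · intro _; omega
            · intro _; exact hy0
      refine ⟨n - t - i' + k, by omega, fun l hl => ?_, ?_, k2⟩
      · by_cases hl2 : i' + l < n
        · rw [add_assoc]; exact hex l hl2
        · obtain ⟨x, hx⟩ := Nat.exists_eq_add_of_le (show n - t - i' ≤ l by omega)
          have e : 1 + a + i' + l = 1 + a + (n - t + x) := by omega
          rw [e, fd x (by omega) (by omega), ← k1 x (by omega), hx]
      · have e : 1 + a + i' + (n - t - i' + k) = 1 + a + (n - t + k) := by omega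
        rw [e, fd k hkt (by omega)]
        simpa using k3

lemma exists_pad {S : ℕ → Bool} {m j K r : ℕ} (h : SData S m j K) (hr : K < r * (m + 1))
    (hr1 : 1 ≤ r) (w : List Bool) (hw : Adm S m w) :
    ∃ a ≤ m, ∃ b ≤ m, Good S m (Pw m r a b w) := by
  set n := w.length with hn
  -- leading run
  have key : ∀ a b c t : ℕ, (hc : ∀ i < c, w.getD i false = true) → (hcn : c ≤ n) → (hac : a + c = m) →
      (ht : ∀ i < t, w.getD (n - t + i) false = true) → (htn : t ≤ n) →
      (hcase : (n = c ∧ b = 0) ∨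
      (c < n ∧ t < n ∧ w.getD c false = false ∧ w.getD (n - t - 1) false = false ∧ b + t = m)) →
      Good S m (Pw m r a b w) := by
    intro a b c t hc hcn hac ht htn hcase
    unfold Good
    rw [Pw_length]
    refine good_core h hr hr1 _ n a b c t ?_ ?_ (Pw_getD_0 ..) (Pw_getD_a m r a b w)
      (Pw_getD_b m r a b w) (Pw_getD_u m r a b w) ?_ hcn hac ?_ htn ?_
    · intro i hi
      obtain ⟨l, hl, h1⟩ := hw.1 i hi
      exact ⟨l, hl, by rw [Pw_getD_w _ _ _ _ _ _ (by omega), h1]⟩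
    · intro i k hk h1 h2
      rw [Pw_getD_w _ _ _ _ _ _ hk]
      refine hw.2 i k hk (fun l hl => ?_) h2
      rw [← h1 l hl, Pw_getD_w _ _ _ _ _ _ (by omega)]
    · intro i hi; rw [Pw_getD_w _ _ _ _ _ _ (by omega), hc i hi]
    · intro i hi; rw [Pw_getD_w _ _ _ _ _ _ (by omega), ht i hi]
    · rcases hcase with h1 | ⟨h1, h2, h3, h4, h5⟩
      · exact Or.inl h1
      · refine Or.inr ⟨h1, h2, ?_, ?_, h5⟩
        · rw [Pw_getD_w _ _ _ _ _ _ (by omega), h3]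
        · rw [Pw_getD_w _ _ _ _ _ _ (by omega), h4]
  by_cases hex : ∃ i, i < n ∧ w.getD i false = false
  · have hcs := Nat.find_spec hex
    have hcm : ∀ i < Nat.find hex, w.getD i false = true := by
      intro i hi
      have := Nat.find_min hex hi
      push Not at this
      simpa using this (by omega)
    set c := Nat.find hex
    have hex2 : ∃ t, t < n ∧ w.getD (n - 1 - t) false = false :=
      ⟨n - 1 - c, by omega, by
        have : n - 1 - (n - 1 - c) = c := by omega
        rw [this]; exact hcs.2⟩
    have hts := Nat.find_spec hex2
    have htm : ∀ i < Nat.find hex2, w.getD (n - 1 - i) false = true := by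
      intro i hi
      have := Nat.find_min hex2 hi
      push Not at this
      simpa using this (by omega)
    set t := Nat.find hex2
    have hcle : c ≤ m := by
      by_contra hcon
      obtain ⟨l, hl, h1⟩ := hw.1 0 (by omega)
      rw [zero_add, hcm l (by omega)] at h1; cases h1
    have htle : t ≤ m := by
      by_contra hcon
      obtain ⟨l, hl, h1⟩ := hw.1 (n - t) (by omega)
      have := htm (t - 1 - l) (by omega)
      have e : n - 1 - (t - 1 - l) = n - t + l := by omega
      rw [e, h1] at this; cases this
    refine ⟨m - c, by omega, m - t, by omega, key _ _ c t hcm (by omega) (by omega) ?_ (by omega) ?_⟩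
    · intro i hi
      rw [← htm (t - 1 - i) (by omega)]; congr 1; omega
    · refine Or.inr ⟨hcs.1, hts.1, hcs.2, ?_, by omega⟩
      have e : n - t - 1 = n - 1 - t := by omega
      rw [e]; exact hts.2
  · push Not at hex
    have hnm : n ≤ m := by
      by_contra hcon
      obtain ⟨l, hl, h1⟩ := hw.1 0 (by omega)
      rw [zero_add] at h1
      exact hex l (by omega) h1
    refine ⟨m - n, by omega, 0, by omega, key _ _ n 0 ?_ le_rfl (by omega) ?_ (by omega) (Or.inl ⟨rfl, rfl⟩)⟩
    · intro i hi; simpa using hex i hi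
    · intro i hi; omega

def Wd (m r : ℕ) (μ : List Bool) (M : ℕ) (q : (ℕ × ℕ) × (ℕ × ℕ)) (w : List Bool) (i : ℕ) : List Bool :=
  Pw m r q.1.1 q.1.2 (w.take (i * M)) ++ (μ ++ Pw m r q.2.1 q.2.2 (w.drop (i * M)))

lemma Wd_length (m r : ℕ) (μ : List Bool) (M : ℕ) (q : (ℕ × ℕ) × (ℕ × ℕ)) (w : List Bool) (i : ℕ) :
    (Wd m r μ M q w i).length =
      w.length + (2 + q.1.1 + q.1.2 + q.2.1 + q.2.2 + 2 * (r * (m + 1)) + μ.length) := by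
  unfold Wd
  rw [List.length_append, List.length_append, Pw_length, Pw_length]
  have h : (w.take (i * M)).length + (w.drop (i * M)).length = w.length := by
    rw [← List.length_append, List.take_append_drop]
  omega

lemma Pw_inj {m r a b : ℕ} {w v : List Bool} (h : Pw m r a b w = Pw m r a b v) : w = v := by
  unfold Pw at h
  have h1 := List.append_cancel_left h
  exact List.append_cancel_right h1

lemma Wd_exists {S : ℕ → Bool} {m j K r : ℕ} (h : SData S m j K) (hr : K < r * (m + 1))
    (hr1 : 1 ≤ r) (μ : List Bool) (hμ : Good S m μ) (M : ℕ) (w : List Bool) (hw : Adm S m w) (i : ℕ) :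
    ∃ q ∈ ((Finset.range (m+1) ×ˢ Finset.range (m+1)) ×ˢ (Finset.range (m+1) ×ˢ Finset.range (m+1))),
      Good S m (Wd m r μ M q w i) := by
  rw [← List.take_append_drop (i * M) w] at hw
  obtain ⟨a1, ha1, b1, hb1, h1⟩ := exists_pad h hr hr1 _ hw.left
  obtain ⟨a2, ha2, b2, hb2, h2⟩ := exists_pad h hr hr1 _ hw.right
  refine ⟨((a1, b1), (a2, b2)), ?_, h1.append (hμ.append h2)⟩
  simp only [Finset.mem_product, Finset.mem_range]; omega

lemma Wd_inj {S : ℕ → Bool} {m r H o : ℕ} {μ : List Bool} {M n : ℕ} {q : (ℕ × ℕ) × (ℕ × ℕ)}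
    (hq : q.1.2 ≤ m) (hM : m + r * (m + 1) + μ.length ≤ M) (ho : o + H ≤ μ.length)
    (hμ : ∀ l < H, μ.getD (o + l) false = S l)
    {w v : List Bool} {i i' : ℕ} (hw : w.length = n) (hv : v.length = n) (hi : i * M ≤ n)
    (hi' : i' * M ≤ n) (hav : Avoid S H v) (he : Wd m r μ M q w i = Wd m r μ M q v i') : i' ≤ i := by
  by_contra hcon
  have hlt : i + 1 ≤ i' := by omega
  have hmul : i * M + M ≤ i' * M := by
    have := Nat.mul_le_mul_right M hlt
    rwa [add_mul, one_mul] at this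
  obtain ⟨l, hl, hne⟩ := hav (i * M + (q.1.2 + r * (m + 1) + o)) (by omega)
  apply hne
  rw [← hμ l hl]
  have e1 : (Wd m r μ M q w i).getD (1 + q.1.1 + (i * M + (q.1.2 + r * (m + 1) + o) + l)) false
      = μ.getD (o + l) false := by
    unfold Wd
    have e : 1 + q.1.1 + (i * M + (q.1.2 + r * (m + 1) + o) + l) =
      (1 + q.1.1 + i * M + q.1.2 + r * (m + 1)) + (o + l) := by omega
    rw [e, getD_right' _ _ _ _ (by rw [Pw_length, List.length_take]; omega), getD_left _ _ _ (by omega)]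
  have e2 : (Wd m r μ M q v i').getD (1 + q.1.1 + (i * M + (q.1.2 + r * (m + 1) + o) + l)) false
      = v.getD (i * M + (q.1.2 + r * (m + 1) + o) + l) false := by
    unfold Wd
    have hlen : (v.take (i' * M)).length = i' * M := by rw [List.length_take]; omega
    rw [getD_left _ _ _ (by rw [Pw_length, hlen]; omega), Pw_getD_w _ _ _ _ _ _ (by omega)]
    conv_rhs => rw [← List.take_append_drop (i' * M) v]
    rw [getD_left _ _ _ (by omega)]
  rw [← e2, ← he, e1]

lemma Wd_inj2 {m r : ℕ} {μ : List Bool} {M n : ℕ} {q : (ℕ × ℕ) × (ℕ × ℕ)}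
    {w v : List Bool} {i : ℕ} (hw : w.length = n) (hv : v.length = n) 
    (he : Wd m r μ M q w i = Wd m r μ M q v i) : w = v := by
  unfold Wd at he
  have h1 := List.append_inj he (by simp only [Pw_length, List.length_take, hw, hv])
  have h2 := Pw_inj h1.1
  have h3 := Pw_inj (List.append_cancel_left h1.2)
  rw [← List.take_append_drop (i * M) w, h2, h3, List.take_append_drop]

lemma list_ne_getD {x y : List Bool} {L : ℕ} (hx : x.length = L) (hy : y.length = L) (h : x ≠ y) :
    ∃ i < L, x.getD i false ≠ y.getD i false := by
  by_contra hcon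
  push Not at hcon
  apply h
  apply List.ext_getElem (by omega)
  intro i h1 h2
  have := hcon i (by omega)
  rwa [List.getD_eq_getElem _ _ h1, List.getD_eq_getElem _ _ h2] at this

lemma ofNat_getD (f : ℕ → Bool) (n i : ℕ) (h : i < n) : ((List.range n).map f).getD i false = f i := by
  rw [List.getD_eq_getElem _ _ (by simpa using h)]; simp

lemma W_nonempty {S : ℕ → Bool} {m j K H : ℕ} (h : SData S m j K) (hH : m + 1 ≤ H) (n : ℕ) :
    ∃ w : List Bool, w.length = n ∧ Adm S m w ∧ Avoid S H w := by
  have hjm := h.hj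
  have hD : ∀ i, decide (i % (m+1) ≠ 0) = false → ∀ l, 1 ≤ l → l ≤ m → 
      decide ((i + l) % (m+1) ≠ 0) = true := by
    intro i hi l h1 h2
    have hi0 : i % (m+1) = 0 := by simpa using hi
    have : (i + l) % (m+1) = l := by
      rw [Nat.add_mod, hi0, zero_add, Nat.mod_mod, Nat.mod_eq_of_lt (by omega)]
    rw [this]; simp; omega
  set D : ℕ → Bool := fun i => decide (i % (m+1) ≠ 0) with hDd
  refine ⟨(List.range n).map D, by simp, ⟨?_, ?_⟩, ?_⟩
  · intro i hi
    rw [List.length_map, List.length_range] at hi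
    by_cases hi0 : i % (m+1) = 0
    · exact ⟨0, by omega, by rw [ofNat_getD _ _ _ (by omega)]; simp [hDd, hi0]⟩
    · have hlt := Nat.mod_lt i (show 0 < m + 1 by omega)
      have hdm := Nat.div_add_mod i (m+1)
      refine ⟨m + 1 - i % (m+1), by omega, ?_⟩
      rw [ofNat_getD _ _ _ (by omega)]
      have : i + (m + 1 - i % (m+1)) = (m+1) * (i / (m+1) + 1) := by
        rw [mul_add]; omega
      rw [hDd]; simp [this]
  · intro i k hk h1 h2
    rw [List.length_map, List.length_range] at hk
    rw [ofNat_getD _ _ _ hk]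
    have h1' : ∀ l < k, D (i + l) = S l := fun l hl => by
      rw [← h1 l hl, ofNat_getD _ _ _ (by omega)]
    have hk0 : k ≠ 0 := by rintro rfl; rw [h.s0] at h2; cases h2
    have h0 := h1' 0 (by omega)
    rw [h.s0, add_zero] at h0
    by_cases hkm : k ≤ m
    · exact hD i h0 k (by omega) hkm
    · have := h1' (j+1) (by omega)
      rw [h.s2] at this
      exact absurd ((hD i h0 (j+1) (by omega) (by omega)).symm.trans this) (by simp)
  · intro i hi
    rw [List.length_map, List.length_range] at hi
    by_contra hcon
    push Not at hcon
    have h1' : ∀ l < H, D (i + l) = S l := fun l hl => by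
      rw [← hcon l hl, ofNat_getD _ _ _ (by omega)]
    have h0 := h1' 0 (by omega)
    rw [h.s0, add_zero] at h0
    have := h1' (j+1) (by omega)
    rw [h.s2] at this
    exact absurd ((hD i h0 (j+1) (by omega) (by omega)).symm.trans this) (by simp)

lemma marker_adm {S : ℕ → Bool} {m j K : ℕ} (h : SData S m j K) (H : ℕ) :
    Adm S m ((List.range H).map S) := by
  refine ⟨fun i hi => ?_, fun i k hk h1 h2 => ?_⟩
  · rw [List.length_map, List.length_range] at hi
    obtain ⟨l, hl, h1⟩ := h.noRun i
    exact ⟨l, hl, by rw [ofNat_getD _ _ _ (by omega), h1]⟩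
  · rw [List.length_map, List.length_range] at hk
    rw [ofNat_getD _ _ _ hk]
    exact h.lyn i k (fun l hl => by rw [← h1 l hl, ofNat_getD _ _ _ (by omega)]) h2

lemma blocks {S : ℕ → Bool} {m j K H : ℕ} (h : SData S m j K) (hH : m + 1 ≤ H) :
    ∃ n, 1 ≤ n ∧ ∃ W : Finset (List Bool), W.Nonempty ∧
      (∀ w, w ∈ W ↔ w.length = n ∧ Adm S m w ∧ Avoid S H w) ∧
      ∃ b L, 2 ≤ b ∧ W.card ^ L < b ^ n ∧ ∃ A : Fin b → ℕ → Bool,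
        (∀ u v, u ≠ v → ∃ i < L, A u i ≠ A v i) ∧ (∀ u, GoodOn S m (A u) 0 L) ∧
        (∀ u, ∃ q, q + m < L ∧ ∀ l ≤ m, A u (q + l) = S l) := by
  classical
  have hr : K < (K+1) * (m+1) := by nlinarith
  set r := K + 1 with hrdef
  have hr1 : 1 ≤ r := by omega
  obtain ⟨a0, ha0, b0, hb0, hμ⟩ := exists_pad h hr hr1 _ (marker_adm h H)
  set μ := Pw m r a0 b0 ((List.range H).map S) with hμd
  have hlμ : (1 + a0) + H ≤ μ.length := by
    rw [hμd, Pw_length, List.length_map, List.length_range]; omega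
  have hmk : ∀ l < H, μ.getD ((1 + a0) + l) false = S l := by
    intro l hl
    rw [hμd, Pw_getD_w _ _ _ _ _ _ (by simpa using hl), ofNat_getD _ _ _ hl]
  set M := 2 + 4 * m + 2 * (r * (m + 1)) + μ.length with hM
  set k := (m+1)^4 * 2 ^ M + 1 with hk
  set n := k * M with hn
  have hM1 : 1 ≤ M := by omega
  have hn1 : 1 ≤ n := Nat.mul_pos (by omega) hM1
  have hfin : {w : List Bool | w.length = n ∧ Adm S m w ∧ Avoid S H w}.Finite :=
    (List.finite_length_eq Bool n).subset (fun w hw => hw.1)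
  set W := hfin.toFinset with hW
  have hWm : ∀ w, w ∈ W ↔ w.length = n ∧ Adm S m w ∧ Avoid S H w := by
    intro w; rw [hW, Set.Finite.mem_toFinset]; rfl
  have hWne : W.Nonempty := by
    obtain ⟨w, hw⟩ := W_nonempty h hH n
    exact ⟨w, (hWm w).2 hw⟩
  have hWc : W.card ≤ 2 ^ n := by
    have h1 : W.card ≤ (Finset.univ : Finset (Fin n → Bool)).card := by
      apply Finset.card_le_card_of_injOn (fun w => fun i => w.getD i false) (fun _ _ => Finset.mem_univ _)
      intro x hx y hy hxy
      have hx' := ((hWm x).1 hx).1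
      have hy' := ((hWm y).1 hy).1
      by_contra hne
      obtain ⟨i, hi, h2⟩ := list_ne_getD hx' hy' hne
      exact h2 (congrFun hxy ⟨i, hi⟩)
    simpa using h1
  have hex := fun w (hw : Adm S m w) i => Wd_exists h hr hr1 μ hμ M w hw i
  choose! Q hQ1 hQ2 using hex
  set T := (Finset.range (m+1) ×ˢ Finset.range (m+1)) ×ˢ (Finset.range (m+1) ×ˢ Finset.range (m+1)) with hT
  have hTc : T.card = (m+1)^4 := by
    rw [hT]; simp only [Finset.card_product, Finset.card_range]; ring
  have hWpos : 0 < W.card := hWne.card_pos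
  obtain ⟨q, hqT, hq⟩ := Finset.exists_lt_card_fiber_of_mul_lt_card_of_maps_to
    (s := W ×ˢ Finset.range k) (t := T) (f := fun p => Q p.1 p.2) (n := 2 ^ M * W.card)
    (by
      intro p hp
      rw [Finset.mem_product] at hp
      exact hQ1 _ ((hWm _).1 hp.1).2.1 _)
    (by
      rw [hTc, Finset.card_product, Finset.card_range, hk]
      nlinarith)
  set F := (W ×ˢ Finset.range k).filter (fun p => Q p.1 p.2 = q) with hF
  have hFm : ∀ p ∈ F, p.1 ∈ W ∧ p.2 < k ∧ Q p.1 p.2 = q := by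
    intro p hp
    rw [hF, Finset.mem_filter, Finset.mem_product, Finset.mem_range] at hp
    exact ⟨hp.1.1, hp.1.2, hp.2⟩
  have hqm : q.1.1 ≤ m ∧ q.1.2 ≤ m ∧ q.2.1 ≤ m ∧ q.2.2 ≤ m := by
    rw [hT] at hqT
    simp only [Finset.mem_product, Finset.mem_range] at hqT; omega
  set L := n + (2 + q.1.1 + q.1.2 + q.2.1 + q.2.2 + 2 * (r * (m + 1)) + μ.length) with hL
  have hLM : L ≤ n + M := by omega
  have hlenF : ∀ p ∈ F, (Wd m r μ M q p.1 p.2).length = L := by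
    intro p hp
    rw [Wd_length, ((hWm _).1 (hFm p hp).1).1]
  have hiM : ∀ p ∈ F, p.2 * M ≤ n := fun p hp => Nat.mul_le_mul_right M (hFm p hp).2.1.le
  have hinj : ∀ p ∈ F, ∀ p' ∈ F, Wd m r μ M q p.1 p.2 = Wd m r μ M q p'.1 p'.2 → p = p' := by
    intro p hp p' hp' he
    have w1 := (hWm _).1 (hFm p hp).1
    have w2 := (hWm _).1 (hFm p' hp').1
    have i1 := Wd_inj (S := S) (H := H) hqm.2.1 (by omega) hlμ hmk w1.1 w2.1 (hiM p hp) (hiM p' hp') w2.2.2 he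
    have i2 := Wd_inj (S := S) (H := H) hqm.2.1 (by omega) hlμ hmk w2.1 w1.1 (hiM p' hp') (hiM p hp) w1.2.2 he.symm
    have e2 : p.2 = p'.2 := le_antisymm i2 i1
    rw [← e2] at he
    exact Prod.ext (Wd_inj2 w1.1 w2.1 he) e2
  have hb2 : 2 ≤ F.card := by
    have : 1 ≤ 2 ^ M * W.card := Nat.mul_pos (by positivity) hWpos
    omega
  refine ⟨n, hn1, W, hWne, hWm, F.card, L, hb2, ?_, ?_⟩
  · calc W.card ^ L ≤ W.card ^ (n + M) := Nat.pow_le_pow_right hWpos hLM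
      _ = W.card ^ M * W.card ^ n := by rw [pow_add, mul_comm]
      _ ≤ (2 ^ n) ^ M * W.card ^ n := Nat.mul_le_mul_right _ (Nat.pow_le_pow_left hWc M)
      _ = (2 ^ M * W.card) ^ n := by rw [mul_pow, ← pow_mul, ← pow_mul, mul_comm n M]
      _ < F.card ^ n := Nat.pow_lt_pow_left hq (by omega)
  · refine ⟨fun u i => (Wd m r μ M q (F.equivFin.symm u).1.1 (F.equivFin.symm u).1.2).getD i false, ?_, ?_, ?_⟩
    · intro u v huv
      refine list_ne_getD (hlenF _ (F.equivFin.symm u).2) (hlenF _ (F.equivFin.symm v).2) ?_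
      intro he
      apply huv
      have := hinj _ (F.equivFin.symm u).2 _ (F.equivFin.symm v).2 he
      exact F.equivFin.symm.injective (Subtype.ext this)
    · intro u
      have hp := (F.equivFin.symm u).2
      beta_reduce
      generalize (F.equivFin.symm u).1 = p at hp ⊢
      have := hQ2 p.1 ((hWm _).1 (hFm p hp).1).2.1 p.2
      rw [(hFm p hp).2.2] at this
      unfold Good at this
      rwa [hlenF p hp] at this
    · intro u
      have hp := (F.equivFin.symm u).2
      beta_reduce
      generalize (F.equivFin.symm u).1 = p at hp ⊢
      have hl := ((hWm _).1 (hFm p hp).1).1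
      have hi := hiM p hp
      refine ⟨(1 + q.1.1 + p.2 * M + q.1.2 + r * (m + 1)) + (1 + a0), by omega, fun l hl => ?_⟩
      simp only [Wd]
      rw [add_assoc _ (1 + a0), getD_right' _ _ _ _ (by rw [Pw_length, List.length_take]; omega),
        getD_left _ _ _ (by omega), hmk l (by omega)]

lemma win_getD (f : ℕ → Bool) (n i : ℕ) (h : i < n) :
    (List.ofFn (fun l : Fin n => f l)).getD i false = f i := by
  rw [List.getD_eq_getElem _ _ (by simpa using h)]; simp

lemma core {β : ℝ} (hβ : 1 < β) (hβ2 : β < 2) {m : ℕ}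
    (hm : ∑ i ∈ Finset.range (m+1), 1 / β ^ (i+1) = 1) {S : ℕ → Bool} {j K : ℕ}
    (h : SData S m j K) {t' : ℝ} (ht : pv β S < t') :
    dimH (Kset β t') < dimH (Kset β (pv β S)) := by
  have h0 : 0 < β := by linarith
  have hlog : 0 < Real.log β := Real.log_pos hβ
  obtain ⟨H0, hH0⟩ := exists_pow_lt_of_lt_one (sub_pos.2 ht) (inv_lt_one_of_one_lt₀ hβ)
  obtain ⟨H, hHm, hHH⟩ : ∃ H, m + 1 ≤ H ∧ 1 / β ^ H < t' - pv β S := by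
    refine ⟨max H0 (m+1), le_max_right _ _, lt_of_le_of_lt ?_ hH0⟩
    rw [one_div, ← inv_pow]
    exact pow_le_pow_of_le_one (by positivity) (inv_lt_one_of_one_lt₀ hβ).le (le_max_left _ _)
  have hpvge : ∀ q, ∑ i ∈ Finset.range q, bd (S i) / β ^ (i+1) ≤ pv β S := by
    intro q
    rw [pv_split hβ S q]
    have : 0 ≤ pv β (fun i => S (i + q)) / β ^ q := div_nonneg (pv_nonneg hβ _) (by positivity)
    linarith
  obtain ⟨n, hn1, W, hWne, hWm, b, L, hb, hlt, A, hA, hG, hM⟩ := blocks h hHm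
  have hup : dimH (Kset β t') ≤ ENNReal.ofReal (Real.log W.card / (n * Real.log β)) := by
    refine dim_upper hβ hβ2 hn1 W hWne _ (fun x hx => hx.1) ?_
    intro x hx i
    have hT : ∀ i, t' ≤ (Tbeta β)^[i] x := hx.2
    have hI := fun i => iter_mem (β := β) hx.1 i
    rw [hWm]
    refine ⟨by simp, ⟨?_, ?_⟩, ?_⟩
    · intro p hp
      rw [List.length_ofFn] at hp
      by_contra hcon
      push Not at hcon
      have hall : ∀ l < m + 1, dig β x (i + p + l) = true := by
        intro l hl
        have := hcon l (by omega)
        rw [win_getD (fun l => dig β x (i + l)) _ _ (by omega)] at this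
        simpa [add_assoc] using this
      have e := dig_split hβ hβ2 hx.1 (i + p) (m + 1)
      rw [Finset.sum_congr rfl (fun l hl => by rw [hall l (Finset.mem_range.1 hl), bd_true]), hm] at e
      have h1 := (hI (i + p)).2
      have h2 : 0 ≤ (Tbeta β)^[i + p + (m+1)] x / β ^ (m+1) := div_nonneg (hI _).1 (by positivity)
      linarith
    · intro p k hk h1 h2
      rw [List.length_ofFn] at hk
      rw [win_getD (fun l => dig β x (i + l)) _ _ hk]
      by_contra hcon
      have hall : ∀ l < k, dig β x (i + p + l) = S l := by
        intro l hl
        rw [← h1 l hl, win_getD (fun l => dig β x (i + l)) _ _ (by omega), add_assoc]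
      have hd : dig β x (i + p + k) = false := by rw [add_assoc]; simpa using hcon
      have e := dig_split hβ hβ2 hx.1 (i + p) (k + 1)
      rw [Finset.sum_range_succ, hd, bd_false, zero_div, add_zero,
        Finset.sum_congr rfl (fun l hl => by rw [hall l (Finset.mem_range.1 hl)])] at e
      have g := hpvge (k + 1)
      rw [Finset.sum_range_succ, h2, bd_true] at g
      have h3 : (Tbeta β)^[i + p + (k+1)] x / β ^ (k+1) < 1 / β ^ (k+1) :=
        div_lt_div_of_pos_right (hI _).2 (by positivity)
      have := hT (i + p)
      linarith
    · intro p hp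
      rw [List.length_ofFn] at hp
      by_contra hcon
      push Not at hcon
      have hall : ∀ l < H, dig β x (i + p + l) = S l := by
        intro l hl
        rw [← hcon l hl, win_getD (fun l => dig β x (i + l)) _ _ (by omega), add_assoc]
      have e := dig_split hβ hβ2 hx.1 (i + p) H
      rw [Finset.sum_congr rfl (fun l hl => by rw [hall l (Finset.mem_range.1 hl)])] at e
      have g := hpvge H
      have h3 : (Tbeta β)^[i + p + H] x / β ^ H < 1 / β ^ H :=
        div_lt_div_of_pos_right (hI _).2 (by positivity)
      have := hT (i + p)
      linarith
  have hlow := dim_lower hβ hβ2 hm h.noRun h.s0 h.hj h.s2 hb A hA hG hM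
  refine lt_of_le_of_lt hup (lt_of_lt_of_le ?_ hlow)
  have hLpos : 0 < L := by
    obtain ⟨q, hq, _⟩ := hM ⟨0, by omega⟩; omega
  have hb1 : (1:ℝ) < b := by exact_mod_cast hb
  have hLr : (0:ℝ) < L := by exact_mod_cast hLpos
  have hnr : (0:ℝ) < n := by exact_mod_cast hn1
  have hWr : (0:ℝ) < W.card := by exact_mod_cast hWne.card_pos
  rw [ENNReal.ofReal_lt_ofReal_iff (div_pos (Real.log_pos hb1) (by positivity))]
  rw [div_lt_div_iff₀ (by positivity) (by positivity)]
  have h5 : (L:ℝ) * Real.log W.card < n * Real.log b := by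
    rw [← Real.log_pow, ← Real.log_pow]
    apply Real.log_lt_log (by positivity)
    exact_mod_cast hlt
  nlinarith

lemma delta_eq (m i : ℕ) :
    perSeq (List.replicate m 1 ++ [0]) i = if i % (m+1) < m then 1 else 0 := by
  unfold perSeq
  have hl : (List.replicate m 1 ++ [0]).length = m + 1 := by simp
  rw [hl]
  have hlt := Nat.mod_lt i (show 0 < m + 1 by omega)
  split_ifs with h
  · rw [List.getD_append _ _ _ _ (by simpa using h), List.getD_eq_getElem _ _ (by simpa using h)]
    simp
  · have : i % (m+1) = m := by omega
    rw [this, List.getD_append_right _ _ _ _ (by simp)]; simp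

lemma quasi_sum {β : ℝ} (hβ : 1 < β) (m : ℕ)
    (hδ : ∑' i : ℕ, (perSeq (List.replicate m 1 ++ [0]) i : ℝ) / β ^ (i + 1) = 1) :
    ∑ i ∈ Finset.range (m+1), 1 / β ^ (i+1) = 1 := by
  have hd := delta_eq m
  have h0 : 0 < β := by linarith
  set z : ℕ → Bool := fun i => decide (i % (m+1) < m) with hz
  have hpv : pv β z = 1 := by
    rw [← hδ]; unfold pv
    apply tsum_congr; intro i
    rw [hd i]; simp only [hz, bd]
    by_cases h : i % (m+1) < m <;> simp [h]
  have hs := pv_split hβ z (m+1)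
  have hsh : (fun i => z (i + (m+1))) = z := by
    funext i; simp only [hz, Nat.add_mod_right]
  rw [hsh, hpv, Finset.sum_range_succ] at hs
  have hzm : z m = false := by simp [hz]
  rw [hzm, bd_false, zero_div, add_zero] at hs
  rw [Finset.sum_range_succ]
  refine Eq.trans ?_ hs.symm
  congr 1
  apply Finset.sum_congr rfl
  intro i hi
  have hi' := Finset.mem_range.1 hi
  have : z i = true := by simp [hz, Nat.mod_eq_of_lt (show i < m + 1 by omega), hi']
  rw [this, bd_true]

lemma per_shift (s : List ℕ) (n k : ℕ) : perSeq s (n + k) = perSeq s (n % s.length + k) := by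
  unfold perSeq; simp

lemma per_le (s : List ℕ) (h : ∀ a ∈ s, a ≤ 1) (i : ℕ) : perSeq s i ≤ 1 := by
  unfold perSeq
  rcases lt_or_ge (i % s.length) s.length with h1 | h1
  · rw [List.getD_eq_getElem _ _ h1]; exact h _ (List.getElem_mem _)
  · rw [List.getD_eq_default _ _ h1]; omega

lemma per_lyn {s : List ℕ} (hne : s ≠ []) (h1 : ∀ a ∈ s, a ≤ 1)
    (h2 : ∀ i, 1 ≤ i → i < s.length →
      seqLt (wordSeq (s.take (s.length - i))) (wordSeq (s.drop i))) (n k : ℕ)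
    (he : ∀ l < k, perSeq s (n + l) = perSeq s l) (hk : perSeq s k = 1) : perSeq s (n + k) = 1 := by
  have hp : 0 < s.length := List.length_pos_of_ne_nil hne
  have hr := Nat.mod_lt n hp
  simp only [per_shift s n] at he ⊢
  generalize n % s.length = r at *
  by_cases hr0 : r = 0
  · rw [hr0, zero_add]; exact hk
  obtain ⟨q, hq1, hq2⟩ := h2 r (by omega) hr
  have hqlt : q < s.length - r := by
    by_contra hcon
    have : wordSeq (s.drop r) q = 0 := by
      unfold wordSeq; rw [List.getD_eq_default]; simp; omega
    omega
  have ew : ∀ l < s.length - r, wordSeq (s.take (s.length - r)) l = perSeq s l := by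
    intro l hl
    unfold wordSeq perSeq
    rw [Nat.mod_eq_of_lt (by omega), List.getD_eq_getElem _ _ (by simp; omega), List.getElem_take,
      List.getD_eq_getElem]
  have ed : ∀ l < s.length - r, wordSeq (s.drop r) l = perSeq s (r + l) := by
    intro l hl
    unfold wordSeq perSeq
    rw [Nat.mod_eq_of_lt (by omega), List.getD_eq_getElem _ _ (by simp; omega), List.getElem_drop,
      List.getD_eq_getElem]
  rw [ew q hqlt, ed q hqlt] at hq2
  rcases lt_trichotomy k q with hkq | hkq | hkq
  · have := hq1 k hkq
    rw [ew k (by omega), ed k (by omega)] at this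
    rw [← this, hk]
  · subst hkq
    have := per_le s h1 (r + k)
    omega
  · have := he q hkq
    omega

lemma per_sum {β : ℝ} (hβ : 1 < β) (s : List ℕ) (hne : s ≠ []) (h1 : ∀ a ∈ s, a ≤ 1) :
    pv β (fun i => decide (perSeq s i = 1)) = lyndonRight β s := by
  have h0 : 0 < β := by linarith
  have hp : 0 < s.length := List.length_pos_of_ne_nil hne
  have hs := pv_split hβ (fun i => decide (perSeq s i = 1)) s.length
  have hsh : (fun i => (fun i => decide (perSeq s i = 1)) (i + s.length))
      = fun i => decide (perSeq s i = 1) := by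
    funext i; simp [perSeq]
  rw [hsh] at hs
  have hsum : ∑ i ∈ Finset.range s.length, bd (decide (perSeq s i = 1)) / β ^ (i+1) = lyndonLeft β s := by
    unfold lyndonLeft
    apply Finset.sum_congr rfl
    intro i hi
    have hi' := Finset.mem_range.1 hi
    have hle := per_le s h1 i
    have e : perSeq s i = s.getD i 0 := by unfold perSeq; rw [Nat.mod_eq_of_lt hi']
    rw [e] at hle ⊢
    congr 1
    interval_cases s.getD i 0 <;> simp [bd]
  rw [hsum] at hs
  have hbp : 1 < β ^ s.length := one_lt_pow₀ hβ (by omega)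
  unfold lyndonRight
  generalize pv β (fun i => decide (perSeq s i = 1)) = P at *
  have : β ^ s.length - 1 ≠ 0 := by linarith
  field_simp at hs ⊢
  linarith
/-- Let `β ∈ (1,2)` with `δ(β) = (1^m 0)^∞` for some `m ≥ 1` and let
`[t_L, t_R) ⊆ [0, 1 - 1/β)` be a β-Lyndon interval. Then for every `t' ∈ (t_R, 1)`,
`dim_H K_β(t') < dim_H K_β(t_R)`. -/
theorem stmt_16 (β : ℝ) (hβ : β ∈ Set.Ioo (1 : ℝ) 2) (m : ℕ) (hm : 1 ≤ m)
    (hδ : IsQuasiGreedy β (perSeq (List.replicate m 1 ++ [0])))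
    (s : List ℕ) (hs : IsBetaLyndon β s)
    (hsub : Set.Ico (lyndonLeft β s) (lyndonRight β s) ⊆ Set.Ico (0 : ℝ) (1 - 1 / β)) :
    ∀ t' ∈ Set.Ioo (lyndonRight β s) 1,
      dimH (Kset β t') < dimH (Kset β (lyndonRight β s)) := by 
  intro t' ht'
  obtain ⟨hβ1, hβ2⟩ := hβ
  have h0 : 0 < β := by linarith
  obtain ⟨hne, hle, hlyn, hq⟩ := hs
  have hsum := quasi_sum hβ1 m hδ.2.2.1
  have hpv := per_sum hβ1 s hne hle
  have hp : 0 < s.length := List.length_pos_of_ne_nil hne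
  set S : ℕ → Bool := fun i => decide (perSeq s i = 1) with hS
  have hSt : ∀ i, S i = true ↔ perSeq s i = 1 := fun i => by simp [hS]
  have hSf : ∀ i, S i = false ↔ perSeq s i = 0 := fun i => by
    have := per_le s hle i
    simp only [hS, decide_eq_false_iff_not]; omega
  have hSe : ∀ i k, S i = S k → perSeq s i = perSeq s k := by
    intro i k hik
    cases hk : S k with
    | true => rw [hk] at hik; rw [(hSt i).1 hik, (hSt k).1 hk]
    | false => rw [hk] at hik; rw [(hSf i).1 hik, (hSf k).1 hk]
  -- upper bound for the right endpoint
  have hle1 : pv β S ≤ 1 - 1 / β := by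
    rw [hpv]
    have hb1 : 1 / β < 1 := by rw [div_lt_one h0]; exact hβ1
    have hbp : 1 < β ^ s.length := one_lt_pow₀ hβ1 (by omega)
    have hL0 : 0 ≤ lyndonLeft β s := by
      unfold lyndonLeft
      exact Finset.sum_nonneg (fun i _ => by positivity)
    rcases hL0.eq_or_lt with h | h
    · unfold lyndonRight; rw [← h, mul_zero]; linarith
    · have hlt : lyndonLeft β s < lyndonRight β s := by
        unfold lyndonRight
        have : 1 < β ^ s.length / (β ^ s.length - 1) := by
          rw [one_lt_div (by linarith)]; linarith
        nlinarith
      refine le_of_forall_lt (fun c hc => ?_)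
      have := (hsub (show max c (lyndonLeft β s) ∈ _ from ⟨le_max_right _ _, max_lt hc hlt⟩)).2
      exact lt_of_le_of_lt (le_max_left _ _) this
  have hterm : ∀ (z : ℕ → Bool) i, z i = true → 1 / β ^ (i + 1) ≤ pv β z := by
    intro z i hz
    have := (pv_summable hβ1 z).le_tsum i (fun k _ => div_nonneg (bd_nonneg _) (by positivity))
    rw [hz, bd_true] at this
    exact this
  have s0 : S 0 = false := by
    by_contra hcon
    have h1 := hterm S 0 (by simpa using hcon)
    have h2 : 1 < 2 / β := by rw [one_lt_div h0]; exact hβ2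
    have h3 : 2 / β = 1 / β + 1 / β := by ring
    rw [zero_add, pow_one] at h1
    linarith
  have hexj : ∃ j, j < m ∧ S (j + 1) = false := by
    by_contra hcon
    push Not at hcon
    have hall : ∀ l < m, S (l + 1) = true := fun l hl => by simpa using hcon l hl
    have e := pv_split hβ1 S (m + 1)
    rw [Finset.sum_range_succ', s0, bd_false, zero_div, add_zero,
      Finset.sum_congr rfl (fun l hl => by rw [hall l (Finset.mem_range.1 hl), bd_true])] at e
    rw [Finset.sum_range_succ', zero_add, pow_one] at hsum
    obtain ⟨p', hp'⟩ : ∃ p', s.length = p' + 1 := ⟨s.length - 1, by omega⟩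
    have h1 := hterm (fun i => S (i + (m + 1))) (p' * (m + 1) + 1) (by
      have h2 := (hSt _).1 (hall 0 hm)
      refine (hSt _).2 ?_
      refine Eq.trans ?_ h2
      have e2 : p' * (m + 1) + 1 + (m + 1) = s.length * (m + 1) + 1 := by rw [hp']; ring
      rw [e2, per_shift, Nat.mul_mod_right])
    have h3 : 0 < pv β (fun i => S (i + (m + 1))) := lt_of_lt_of_le (by positivity) h1
    have h4 : 0 < pv β (fun i => S (i + (m + 1))) / β ^ (m + 1) := by positivity
    linarith
  have hj := Nat.find_spec hexj
  have hjmin : ∀ i < Nat.find hexj, S (i + 1) = true := by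
    intro i hi
    have := Nat.find_min hexj hi
    push Not at this
    simpa using this (by omega)
  have hdel : ∀ n, ∃ k, (∀ l < k, S (n + l) = decide (l % (m + 1) ≠ m)) ∧ S (n + k) = false ∧
      k % (m + 1) ≠ m := by
    intro n
    obtain ⟨k, hk1, hk2⟩ := hq _ hδ n
    unfold shiftN at hk1 hk2
    rw [delta_eq] at hk2
    refine ⟨k, fun l hl => ?_, ?_, ?_⟩
    · have h1 := hk1 l hl
      rw [delta_eq] at h1
      have h2 := Nat.mod_lt l (show 0 < m + 1 by omega)
      rw [add_comm n l]
      simp only [hS, h1]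
      congr 1
      split_ifs with h3 <;> simp <;> omega
    · rw [hSf, add_comm n k]
      split_ifs at hk2 <;> omega
    · split_ifs at hk2 <;> omega
  choose kf hk1 hk2 hk3 using hdel
  have hper : ∀ n k, S (n + k) = S (n % s.length + k) := by
    intro n k; simp only [hS]; rw [per_shift]
  have hdata : SData S m (Nat.find hexj) ((Finset.range s.length).sup kf + 1) := by
    refine ⟨s0, hj.1, hjmin, hj.2, ?_, ?_⟩
    · intro n k h1 h2
      exact (hSt _).2 (per_lyn hne hle hlyn n k (fun l hl => hSe _ _ (h1 l hl)) ((hSt _).1 h2))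
    · intro n
      have hmod := Nat.mod_lt n hp
      refine ⟨kf (n % s.length), ?_, fun l hl => ?_, ?_, hk3 _⟩
      · exact Nat.lt_succ_of_le (Finset.le_sup (f := kf) (Finset.mem_range.2 hmod))
      · rw [hper]; exact hk1 _ l hl
      · rw [hper]; exact hk2 _
  rw [← hpv]
  exact core hβ1 hβ2 hsum hdata (by rw [hpv]; exact ht'.1)
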